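/- arXiv:1711.03655 — 2 statements merged into one kernel-verified Lean document; each statement's English description precedes it below -/
import Mathlib

section
/- Let A be an equidimensional complete local ring containing a field of dimension d ≥ 2, with separably closed residue field. Then for all 0 ≤ t ≤ d−2, the maximum over closed subsets X ⊆ Spec(A) with dim(X) ≤ t of the number of connected components of Spec(A) \ X is at most 1 + Σ_{i=0}^{t} λ_{i,i+1}(A). -/
open IsLocalRing PrimeSpectrum CategoryTheory

noncomputable section

universe u

/-- The connectedness dimension of `A`: the minimal dimension of a closed subset
`Z = V(J)` of `Spec A` such that `Spec A \ Z` is disconnected (the empty space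
counting as disconnected). -/
noncomputable def connDim (A : Type*) [CommRing A] : WithBot ℕ∞ :=
  sInf {d | ∃ J : Ideal A, ringKrullDim (A ⧸ J) = d ∧
    ¬ IsConnected ((PrimeSpectrum.zeroLocus (J : Set A))ᶜ)}

/-- The module `Ext^i_R(k, H^{n-j}_I(R))` whose dimension over the residue field
`k` of `R` is the Lyubeznik number `λ_{i,j}` of `R/I`. -/
noncomputable def lyubeznikModule (R : Type u) [CommRing R] [IsLocalRing R]
    (I : Ideal R) (n i j : ℕ) : ModuleCat.{u} R :=
  ((_root_.Ext R (ModuleCat.{u} R) i).obj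
    (Opposite.op (ModuleCat.of R (ResidueField R)))).obj
    ((localCohomology I (n - j)).obj (ModuleCat.of R R))

/-- The Lyubeznik number `λ_{i,j}` of `R/I`, i.e. the dimension of
`Ext^i_R(k, H^{n-j}_I(R))` as a vector space over the residue field `k`, encoded as
the Krull dimension of its lattice of `R`-submodules (which agrees with the length
of the module, hence with the `k`-dimension, since the module is annihilated by the
maximal ideal). -/
noncomputable def lyubeznikNumber (R : Type u) [CommRing R] [IsLocalRing R]
    (I : Ideal R) (n i j : ℕ) : WithBot ℕ∞ :=
  Order.krullDim (Submodule R (lyubeznikModule R I n i j))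

/-- `A` contains a field. -/
def ContainsField (A : Type*) [CommRing A] : Prop := ∃ F : Subring A, IsField F

/-- `R` is a regular local ring: Noetherian, local, and the maximal ideal is
generated by `dim R` elements. -/
def IsRegularLocal (R : Type*) [CommRing R] [IsLocalRing R] [IsNoetherianRing R] : Prop :=
  ∃ s : Finset R, Ideal.span (s : Set R) = maximalIdeal R ∧
    ringKrullDim R = (s.card : ℕ)

section CZ
open CategoryTheory.Abelian CategoryTheory.Limits

variable {R : Type u} [CommRing R]

/-- cosyzygies -/
def cz (M : ModuleCat.{u} R) : ℕ → ModuleCat.{u} R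
  | 0 => M
  | q + 1 => cokernel (Injective.ι (cz M q))

/-- the injective module containing the cosyzygy -/
def ce (M : ModuleCat.{u} R) (q : ℕ) : ModuleCat.{u} R := Injective.under (cz M q)

instance (M : ModuleCat.{u} R) (q : ℕ) : Injective (ce M q) := by
  unfold ce; infer_instance

/-- inclusion -/
def czi (M : ModuleCat.{u} R) (q : ℕ) : cz M q ⟶ ce M q := Injective.ι (cz M q)

/-- projection -/
def czp (M : ModuleCat.{u} R) (q : ℕ) : ce M q ⟶ cz M (q + 1) := cokernel.π (Injective.ι (cz M q))

/-- degree zero -/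
def czid (M : ModuleCat.{u} R) : cz M 0 ⟶ M := 𝟙 M

/-- degree zero -/
def czid' (M : ModuleCat.{u} R) : M ⟶ cz M 0 := 𝟙 M

lemma czid_comp (M : ModuleCat.{u} R) : czid M ≫ czid' M = 𝟙 _ := Category.id_comp (𝟙 M)
lemma czid'_comp (M : ModuleCat.{u} R) : czid' M ≫ czid M = 𝟙 _ := Category.id_comp (𝟙 M)

lemma czi_czp (M : ModuleCat.{u} R) (q : ℕ) : czi M q ≫ czp M q = 0 := cokernel.condition _

/-- the defining sequence -/
abbrev czS (M : ModuleCat.{u} R) (q : ℕ) : ShortComplex (ModuleCat.{u} R) :=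
  ShortComplex.mk (czi M q) (czp M q) (czi_czp M q)

lemma czS_exact (M : ModuleCat.{u} R) (q : ℕ) : (czS M q).ShortExact := by
  refine ShortComplex.ShortExact.mk' ?_ ?_ ?_
  · exact ShortComplex.exact_of_g_is_cokernel _ (cokernelIsCokernel (Injective.ι (cz M q)))
  · exact Injective.ι_mono (cz M q)
  · exact (inferInstance : Epi (cokernel.π (Injective.ι (cz M q))))

/-- iterated connecting class -/
def cze (M : ModuleCat.{u} R) : (q : ℕ) → Abelian.Ext.{u} (cz M q) M q
  | 0 => Ext.mk₀ (czid M)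
  | q + 1 => (czS_exact M q).extClass.comp (cze M q) (add_comm 1 q)

lemma cze_surj (L M : ModuleCat.{u} R) (q i j : ℕ) (h : i + q = j) (x : Abelian.Ext.{u} L M j) :
    ∃ y : Abelian.Ext.{u} L (cz M q) i, y.comp (cze M q) h = x := by
  induction q generalizing i j with
  | zero =>
    obtain rfl : i = j := by omega
    refine ⟨x.comp (Ext.mk₀ (czid' M)) (add_zero _), ?_⟩
    rw [cze, Ext.comp_assoc_of_second_deg_zero, Ext.mk₀_comp_mk₀, czid'_comp, Ext.comp_mk₀_id]
  | succ q ih =>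
    obtain ⟨y, hy⟩ := ih (i + 1) j (by omega) x
    obtain ⟨z, hz⟩ := Ext.covariant_sequence_exact₁ L (czS_exact M q) (n₁ := i + 1) y
      (Ext.eq_zero_of_injective _) (n₀ := i) rfl
    refine ⟨z, ?_⟩
    rw [← hy, ← hz, cze]
    exact (Ext.comp_assoc (a₁₂ := i + 1) z _ _ rfl _ (by omega)).symm

lemma cze_inj (L M : ModuleCat.{u} R) (q i j : ℕ) (h : (i + 1) + q = j)
    (y : Abelian.Ext.{u} L (cz M q) (i + 1)) (hy : y.comp (cze M q) h = 0) : y = 0 := by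
  induction q generalizing i j with
  | zero =>
    obtain rfl : i + 1 = j := by omega
    have := Ext.comp_assoc_of_second_deg_zero y (Ext.mk₀ (czid M)) (Ext.mk₀ (czid' M)) (add_zero _)
    rw [cze] at hy
    rw [hy, Ext.zero_comp, Ext.mk₀_comp_mk₀, czid_comp, Ext.comp_mk₀_id] at this
    exact this.symm
  | succ q ih =>
    have h1 : y.comp (czS_exact M q).extClass (rfl : (i + 1) + 1 = i + 1 + 1) = 0 := by
      apply ih (i + 1) j (by omega)
      rw [← hy, cze]
      exact (Ext.comp_assoc (a₁₂ := i + 1 + 1) y _ _ rfl _ (by omega))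
    obtain ⟨w, hw⟩ := Ext.covariant_sequence_exact₃ L (czS_exact M q) y rfl h1
    rw [← hw, Ext.eq_zero_of_injective w, Ext.zero_comp]

lemma cze_lift (L M : ModuleCat.{u} R) (q : ℕ) (z : L ⟶ cz M (q + 1))
    (hz : (Ext.mk₀ z).comp (cze M (q + 1)) (zero_add _) = 0) :
    ∃ w : L ⟶ ce M q, w ≫ (czS M q).g = z := by
  have h1 : (Ext.mk₀ z).comp (czS_exact M q).extClass (rfl : 0 + 1 = 0 + 1) = 0 := by
    apply cze_inj L M q 0 (q + 1) (by omega)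
    rw [← hz, cze]
    exact (Ext.comp_assoc (a₁₂ := 0 + 1) (Ext.mk₀ z) _ _ rfl _ (by omega))
  obtain ⟨w, hw⟩ := Ext.covariant_sequence_exact₃ L (czS_exact M q) (Ext.mk₀ z) rfl h1
  obtain ⟨w, rfl⟩ := (Ext.mk₀_bijective _ _).2 w
  refine ⟨w, (Ext.mk₀_bijective _ _).1 ?_⟩
  rw [← hw]
  exact (Ext.mk₀_comp_mk₀ _ _).symm

lemma cze_zero (L M : ModuleCat.{u} R) (q : ℕ) (w : L ⟶ ce M q) :
    (Ext.mk₀ (w ≫ (czS M q).g)).comp (cze M (q + 1)) (zero_add _) = 0 := by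
  have h1 : (Ext.mk₀ (w ≫ (czS M q).g)).comp (czS_exact M q).extClass (zero_add 1) = 0 := by
    have : Ext.mk₀ (w ≫ (czS M q).g) = (Ext.mk₀ w).comp (Ext.mk₀ (czS M q).g) (zero_add 0) :=
      (Ext.mk₀_comp_mk₀ _ _).symm
    rw [this, Ext.comp_assoc_of_second_deg_zero]
    rw [(czS_exact M q).comp_extClass, Ext.comp_zero]
  have := Ext.comp_assoc (a₁₂ := 1) (a := q + 1) (Ext.mk₀ (w ≫ (czS M q).g))
    (czS_exact M q).extClass (cze M q) (zero_add 1) (add_comm 1 q) (by omega)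
  rw [h1, Ext.zero_comp] at this
  exact this.symm

end CZ

section Gamma

variable {R : Type u} [CommRing R]

/-- `I`-torsion submodule -/
def Gam (I : Ideal R) (M : Type u) [AddCommGroup M] [Module R M] : Submodule R M where
  carrier := {x | I ≤ (Ideal.torsionOf R M x).radical}
  add_mem' := by
    intro x y hx hy
    have : Ideal.torsionOf R M x ⊓ Ideal.torsionOf R M y ≤ Ideal.torsionOf R M (x + y) := by
      rintro a ⟨h1, h2⟩
      rw [SetLike.mem_coe, Ideal.mem_torsionOf_iff] at *
      rw [smul_add, h1, h2, add_zero]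
    exact (le_inf hx hy).trans ((Ideal.radical_inf _ _).ge.trans (Ideal.radical_mono this))
  zero_mem' := by
    simp [Ideal.radical_top]
  smul_mem' := by
    intro c x hx
    refine le_trans hx (Ideal.radical_mono ?_)
    intro a ha
    rw [Ideal.mem_torsionOf_iff] at *
    rw [smul_comm, ha, smul_zero]

variable {M N : Type u} [AddCommGroup M] [Module R M] [AddCommGroup N] [Module R N]

lemma mem_Gam {I : Ideal R} {x : M} : x ∈ Gam I M ↔ I ≤ (Ideal.torsionOf R M x).radical := Iff.rfl

lemma Gam_sup (I J : Ideal R) : Gam (I ⊔ J) M = Gam I M ⊓ Gam J M := by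
  ext x; simp [mem_Gam]

lemma Gam_anti {I J : Ideal R} (h : I ≤ J.radical) : Gam J M ≤ Gam I M := by
  intro x hx
  rw [mem_Gam] at *
  exact h.trans ((Ideal.radical_le_radical_iff).2 hx)

lemma Gam_of_pow {I : Ideal R} {x : M} (s : ℕ) (h : ∀ a ∈ I ^ s, a • x = 0) : x ∈ Gam I M := by
  intro a ha
  exact ⟨s, h _ (Ideal.pow_mem_pow ha s)⟩

lemma Gam_exists_pow [IsNoetherianRing R] {I : Ideal R} {x : M} (h : x ∈ Gam I M) :
    ∃ s, ∀ a ∈ I ^ s, a • x = 0 := by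
  obtain ⟨s, hs⟩ := Ideal.exists_pow_le_of_le_radical_of_fg h (IsNoetherian.noetherian I)
  exact ⟨s, fun a ha => hs ha⟩

lemma Gam_map {I : Ideal R} (f : M →ₗ[R] N) {x : M} (h : x ∈ Gam I M) : f x ∈ Gam I N := by
  refine le_trans h (Ideal.radical_mono ?_)
  intro a ha
  rw [Ideal.mem_torsionOf_iff] at *
  rw [← map_smul, ha, map_zero]

lemma Gam_of_map {I : Ideal R} (f : M →ₗ[R] N) (hf : Function.Injective f) {x : M}
    (h : f x ∈ Gam I N) : x ∈ Gam I M := by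
  refine le_trans h (Ideal.radical_mono ?_)
  intro a ha
  rw [Ideal.mem_torsionOf_iff] at *
  rw [← map_smul] at ha
  exact hf (by rw [ha, map_zero])

/-- induced map -/
def Gmap (I : Ideal R) (f : M →ₗ[R] N) : Gam I M →ₗ[R] Gam I N :=
  f.restrict (fun _ h => Gam_map f h)

@[simp] lemma Gmap_coe (I : Ideal R) (f : M →ₗ[R] N) (x : Gam I M) : (Gmap I f x : N) = f x := rfl

lemma Gam_fg_ann (I : Ideal R) (N : Submodule R M) (hN : N.FG) (h : N ≤ Gam I M) :
    I ≤ N.annihilator.radical := by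
  induction N, hN using Submodule.fg_induction with
  | singleton x =>
    have := h (Submodule.mem_span_singleton_self x)
    rw [mem_Gam] at this
    refine this.trans (Ideal.radical_mono ?_)
    intro a ha
    rw [Submodule.mem_annihilator_span_singleton]
    exact ha
  | sup N₁ N₂ _ _ h1 h2 =>
    rw [Submodule.annihilator_sup, Ideal.radical_inf]
    exact le_inf (h1 (le_sup_left.trans h)) (h2 (le_sup_right.trans h))

lemma artin_rees [IsNoetherianRing R] (I J : Ideal R) (s : ℕ) :
    ∃ m, I ^ m ⊓ J ≤ I ^ s * J := by
  obtain ⟨k, hk⟩ := Ideal.exists_pow_inf_eq_pow_smul I (M := R) J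
  refine ⟨k + s, ?_⟩
  have := hk (k + s) (by omega)
  rw [Nat.add_sub_cancel_left] at this
  have h2 : I ^ (k + s) ⊓ J = I ^ (k + s) • (⊤ : Submodule R R) ⊓ J := by simp
  rw [h2, this, smul_eq_mul]
  exact Ideal.mul_mono_right inf_le_right

lemma Gam_baer [IsNoetherianRing R] (I : Ideal R) (hM : Module.Baer R M) :
    Module.Baer R (Gam I M) := by
  intro 𝔞 g
  let g₀ : 𝔞 →ₗ[R] M := (Gam I M).subtype ∘ₗ g
  have hfg : (LinearMap.range g₀).FG := by
    rw [← Submodule.map_top]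
    exact (IsNoetherian.noetherian (⊤ : Submodule R 𝔞)).map g₀
  obtain ⟨s, hs⟩ := Ideal.exists_pow_le_of_le_radical_of_fg
    (Gam_fg_ann I (LinearMap.range g₀) hfg (by
        rintro _ ⟨x, rfl⟩; exact (g x).2)) (IsNoetherian.noetherian I)
  obtain ⟨m, hm⟩ := artin_rees I 𝔞 s
  have hg : ∀ a : 𝔞, (a : R) ∈ I ^ m → g₀ a = 0 := by
    intro a ha
    have h1 : (a : R) ∈ I ^ s * 𝔞 := hm ⟨ha, a.2⟩
    have : ∀ r ∈ I ^ s * 𝔞, ∃ h : r ∈ 𝔞, g₀ ⟨r, h⟩ = 0 := by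
      intro r hr
      refine Submodule.mul_induction_on hr ?_ ?_
      · intro x hx y hy
        refine ⟨Ideal.mul_mem_left _ _ hy, ?_⟩
        have : g₀ ⟨x * y, Ideal.mul_mem_left _ _ hy⟩ = x • g₀ ⟨y, hy⟩ := by
          rw [← map_smul]; rfl
        rw [this]
        exact (Submodule.mem_annihilator.1 (hs hx)) _ ⟨_, rfl⟩
      · rintro x y ⟨hx, hx'⟩ ⟨hy, hy'⟩
        refine ⟨add_mem hx hy, ?_⟩
        have : g₀ ⟨x + y, add_mem hx hy⟩ = g₀ ⟨x, hx⟩ + g₀ ⟨y, hy⟩ := by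
          rw [← map_add]; rfl
        rw [this, hx', hy', add_zero]
    exact (this _ h1).2
  let K : Submodule R 𝔞 := Submodule.comap 𝔞.subtype (I ^ m)
  let f : (𝔞 ⧸ K) →ₗ[R] (R ⧸ I ^ m) := K.mapQ (I ^ m) 𝔞.subtype le_rfl
  have hf : Function.Injective f := by
    rw [← LinearMap.ker_eq_bot, LinearMap.ker_eq_bot']
    intro x hx
    obtain ⟨x, rfl⟩ := Submodule.Quotient.mk_surjective _ x
    have : (Submodule.Quotient.mk (x : R) : R ⧸ I ^ m) = 0 := hx
    rw [Submodule.Quotient.mk_eq_zero] at this ⊢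
    exact this
  obtain ⟨h, hh⟩ := Module.Baer.extension_property hM f hf (K.liftQ g₀ (fun x hx => hg x hx))
  refine ⟨LinearMap.codRestrict _ (h ∘ₗ Submodule.mkQ (I ^ m)) ?_, ?_⟩
  · intro c
    refine Gam_of_pow m ?_
    intro a ha
    rw [← map_smul, LinearMap.comp_apply]
    have : Submodule.mkQ (I ^ m) (a • c) = 0 := by
      rw [Submodule.mkQ_apply, Submodule.Quotient.mk_eq_zero]
      exact Ideal.mul_mem_right _ _ ha
    rw [this, map_zero]
  · intro x hx
    apply Subtype.ext
    exact LinearMap.congr_fun hh (Submodule.Quotient.mk ⟨x, hx⟩)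

lemma Gam_mv [IsNoetherianRing R] (J J' : Ideal R) (hM : Module.Baer R M) (e : M)
    (he : e ∈ Gam (J ⊓ J') M) : ∃ a ∈ Gam J M, ∃ b ∈ Gam J' M, a + b = e := by
  obtain ⟨s, hs⟩ := Gam_exists_pow he
  obtain ⟨m, hm⟩ := artin_rees J (J' ^ s) s
  have hK : ∀ a ∈ J ^ m ⊓ J' ^ s, a • e = 0 := by
    intro a ha
    refine hs a ?_
    have := hm ha
    rw [← mul_pow] at this
    exact Ideal.pow_right_mono Ideal.mul_le_inf s this
  let K := J ^ m ⊓ J' ^ s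
  let f : (R ⧸ K) →ₗ[R] (R ⧸ J ^ m) × (R ⧸ J' ^ s) :=
    LinearMap.prod (Submodule.mapQ K (J ^ m) LinearMap.id inf_le_left)
      (Submodule.mapQ K (J' ^ s) LinearMap.id inf_le_right)
  have hf : Function.Injective f := by
    rw [← LinearMap.ker_eq_bot, LinearMap.ker_eq_bot']
    intro x hx
    obtain ⟨x, rfl⟩ := Submodule.Quotient.mk_surjective _ x
    have h1 : (Submodule.Quotient.mk (x : R) : R ⧸ J ^ m) = 0 := congrArg Prod.fst hx
    have h2 : (Submodule.Quotient.mk (x : R) : R ⧸ J' ^ s) = 0 := congrArg Prod.snd hx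
    rw [Submodule.Quotient.mk_eq_zero] at h1 h2 ⊢
    exact ⟨h1, h2⟩
  obtain ⟨h, hh⟩ := Module.Baer.extension_property hM f hf
    (K.liftQ (LinearMap.toSpanSingleton R M e) (fun x hx => hK x hx))
  have hd := LinearMap.congr_fun hh (Submodule.Quotient.mk 1)
  refine ⟨h (Submodule.Quotient.mk 1, 0), Gam_of_pow m ?_, h (0, Submodule.Quotient.mk 1),
    Gam_of_pow s ?_, ?_⟩
  · intro a ha
    rw [← map_smul]
    have : a • ((Submodule.Quotient.mk 1, 0) : (R ⧸ J ^ m) × (R ⧸ J' ^ s)) = 0 := by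
      refine Prod.ext ?_ (smul_zero _)
      change (Submodule.Quotient.mk (a • (1 : R)) : R ⧸ J ^ m) = 0
      rw [Submodule.Quotient.mk_eq_zero]; simpa using ha
    rw [this, map_zero]
  · intro a ha
    rw [← map_smul]
    have : a • ((0, Submodule.Quotient.mk 1) : (R ⧸ J ^ m) × (R ⧸ J' ^ s)) = 0 := by
      refine Prod.ext (smul_zero _) ?_
      change (Submodule.Quotient.mk (a • (1 : R)) : R ⧸ J' ^ s) = 0
      rw [Submodule.Quotient.mk_eq_zero]; simpa using ha
    rw [this, map_zero]
  · rw [← map_add]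
    have h1 : ((Submodule.Quotient.mk 1, 0) + (0, Submodule.Quotient.mk 1) :
      (R ⧸ J ^ m) × (R ⧸ J' ^ s)) = f (Submodule.Quotient.mk 1) := by
      refine Prod.ext ?_ ?_ <;> simp [f]
    rw [h1]
    refine Eq.trans hd ?_
    exact one_smul R e

end Gamma

section GExt
open CategoryTheory.Abelian CategoryTheory.Limits

variable {R : Type u} [CommRing R]

/-- length of Ext -/
abbrev eln (L M : ModuleCat.{u} R) (i : ℕ) : ℕ∞ := Module.length R (Abelian.Ext.{u} L M i)

lemma length_le_of_exact' {M N P : Type u} [AddCommGroup M] [Module R M] [AddCommGroup N]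
    [Module R N] [AddCommGroup P] [Module R P] (f : M →ₗ[R] N) (g : N →ₗ[R] P)
    (h : ∀ x, g x = 0 → ∃ y, f y = x) :
    Module.length R N ≤ Module.length R M + Module.length R P := by
  rw [Module.length_eq_add_of_exact (LinearMap.ker g).subtype g.rangeRestrict
    Subtype.val_injective (LinearMap.surjective_rangeRestrict _) (by
      rw [LinearMap.exact_iff, LinearMap.ker_rangeRestrict, Submodule.range_subtype])]
  refine add_le_add ?_ (Module.length_le_of_injective _ (LinearMap.range g).injective_subtype)
  have h1 : LinearMap.ker g ≤ LinearMap.range f := fun x hx => h x hx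
  exact (Module.length_le_of_injective _ (Submodule.inclusion_injective h1)).trans
    (Module.length_le_of_surjective f.rangeRestrict (LinearMap.surjective_rangeRestrict _))

lemma ses_of (S : ShortComplex (ModuleCat.{u} R)) (hf : Function.Injective S.f.hom)
    (hg : Function.Surjective S.g.hom) (h : ∀ x, S.g.hom x = 0 → ∃ y, S.f.hom y = x) :
    S.ShortExact := by
  refine ShortComplex.ShortExact.mk' ?_ ((ModuleCat.mono_iff_injective _).2 hf)
    ((ModuleCat.epi_iff_surjective _).2 hg)
  rw [ShortComplex.moduleCat_exact_iff]
  exact h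

/-- short complex of a linear map with its cokernel -/
abbrev subS {M : Type u} [AddCommGroup M] [Module R M] (N : Submodule R M) :
    ShortComplex (ModuleCat.{u} R) :=
  ShortComplex.mk (X₁ := ModuleCat.of R N) (X₂ := ModuleCat.of R M) (X₃ := ModuleCat.of R (M ⧸ N))
    (ModuleCat.ofHom N.subtype) (ModuleCat.ofHom N.mkQ) (by
      ext x; simp)

lemma subS_exact {M : Type u} [AddCommGroup M] [Module R M] (N : Submodule R M) :
    (subS N).ShortExact := by
  refine ses_of _ N.injective_subtype N.mkQ_surjective ?_
  intro x hx
  exact ⟨⟨x, (Submodule.Quotient.mk_eq_zero _).1 hx⟩, rfl⟩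

/-- short complex from a surjection -/
abbrev surS {M N P : Type u} [AddCommGroup M] [Module R M] [AddCommGroup N] [Module R N]
    [AddCommGroup P] [Module R P] (f : M →ₗ[R] N) (g : N →ₗ[R] P) (h : g ∘ₗ f = 0) :
    ShortComplex (ModuleCat.{u} R) :=
  ShortComplex.mk (X₁ := ModuleCat.of R M) (X₂ := ModuleCat.of R N) (X₃ := ModuleCat.of R P)
    (ModuleCat.ofHom f) (ModuleCat.ofHom g) (by rw [← ModuleCat.ofHom_comp, h]; rfl)

lemma surS_exact {M N P : Type u} [AddCommGroup M] [Module R M] [AddCommGroup N] [Module R N]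
    [AddCommGroup P] [Module R P] (f : M →ₗ[R] N) (g : N →ₗ[R] P) (h : g ∘ₗ f = 0)
    (hf : Function.Injective f) (hg : Function.Surjective g) (hx : ∀ x, g x = 0 → ∃ y, f y = x) :
    (surS f g h).ShortExact :=
  ses_of _ hf hg hx

lemma eln_mid (L : ModuleCat.{u} R) {S : ShortComplex (ModuleCat.{u} R)} (hS : S.ShortExact)
    (i : ℕ) : eln L S.X₂ i ≤ eln L S.X₁ i + eln L S.X₃ i :=
  length_le_of_exact' (Ext.postcompOfLinear (Ext.mk₀ S.f) R L (add_zero i))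
    (Ext.postcompOfLinear (Ext.mk₀ S.g) R L (add_zero i))
    (fun x hx => Ext.covariant_sequence_exact₂ L hS x hx)

lemma eln_one (L : ModuleCat.{u} R) {S : ShortComplex (ModuleCat.{u} R)} (hS : S.ShortExact)
    (i : ℕ) : eln L S.X₁ (i + 1) ≤ eln L S.X₃ i + eln L S.X₂ (i + 1) :=
  length_le_of_exact' (Ext.postcompOfLinear hS.extClass R L rfl)
    (Ext.postcompOfLinear (Ext.mk₀ S.f) R L (add_zero (i + 1)))
    (fun x hx => Ext.covariant_sequence_exact₁ L hS x hx rfl)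

variable (M : ModuleCat.{u} R) (J : Ideal R)

/-- torsion of cosyzygy -/
abbrev GZ (q : ℕ) : ModuleCat.{u} R := ModuleCat.of R (Gam J (cz M q))

/-- torsion of injective -/
abbrev GE (q : ℕ) : ModuleCat.{u} R := ModuleCat.of R (Gam J (ce M q))

instance GE_inj [IsNoetherianRing R] (q : ℕ) : Injective (GE M J q) := by
  rw [← Module.injective_iff_injective_object]
  apply Module.Baer.injective
  apply Gam_baer
  apply Module.Baer.of_injective
  rw [Module.injective_iff_injective_object]
  change Injective (ce M q)
  infer_instance

/-- image -/
abbrev GB (q : ℕ) : Submodule R (Gam J (cz M (q + 1))) :=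
  LinearMap.range (Gmap J (czp M q).hom)

lemma czi_injective (q : ℕ) : Function.Injective (czi M q).hom :=
  (czS_exact M q).moduleCat_injective_f

lemma czp_surjective (q : ℕ) : Function.Surjective (czp M q).hom :=
  (czS_exact M q).moduleCat_surjective_g

lemma cz_ex (q : ℕ) (x : ce M q) (hx : (czp M q).hom x = 0) : ∃ y, (czi M q).hom y = x :=
  (ShortComplex.moduleCat_exact_iff _).1 (czS_exact M q).exact x hx

lemma cz_comp (q : ℕ) (x : cz M q) : (czp M q).hom ((czi M q).hom x) = 0 :=
  congrArg (fun f => f.hom x) (czi_czp M q)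

/-- first sequence -/
abbrev GS1 (q : ℕ) : ShortComplex (ModuleCat.{u} R) :=
  surS (Gmap J (czi M q).hom) (Gmap J (czp M q).hom).rangeRestrict (by
    ext x
    exact cz_comp M q x)

lemma GS1_exact (q : ℕ) : (GS1 M J q).ShortExact := by
  refine surS_exact _ _ _ ?_ (LinearMap.surjective_rangeRestrict _) ?_
  · intro x y h
    exact Subtype.ext (czi_injective M q (congrArg Subtype.val h))
  · rintro ⟨x, hx⟩ h
    have h' : (czp M q).hom x = 0 := congrArg (fun z => z.1.1) h
    obtain ⟨y, rfl⟩ := cz_ex M q x h'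
    exact ⟨⟨y, Gam_of_map _ (czi_injective M q) hx⟩, rfl⟩

/-- the local cohomology model in degree `q+1` -/
abbrev GH (q : ℕ) : ModuleCat.{u} R := ModuleCat.of R (Gam J (cz M (q + 1)) ⧸ GB M J q)

/-- inclusion -/
abbrev gin (q : ℕ) : GZ M J q ⟶ cz M q := ModuleCat.ofHom (Gam J (cz M q)).subtype

/-- the class zeta -/
abbrev gze (q : ℕ) : Abelian.Ext.{u} (GZ M J q) M q :=
  (Ext.mk₀ (gin M J q)).comp (cze M q) (zero_add q)

/-- inclusion of image -/
abbrev gbi (q : ℕ) : ModuleCat.of R (GB M J q) ⟶ GZ M J (q + 1) :=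
  ModuleCat.ofHom (GB M J q).subtype

lemma GS1_gze (q : ℕ) :
    (GS1_exact M J q).extClass.comp (gze M J q) (add_comm 1 q) =
      (Ext.mk₀ (gbi M J q)).comp (gze M J (q + 1)) (zero_add (q + 1)) := by
  let φ : GS1 M J q ⟶ czS M q :=
    { τ₁ := gin M J q
      τ₂ := ModuleCat.ofHom (Gam J (ce M q)).subtype
      τ₃ := gbi M J q ≫ gin M J (q + 1)
      comm₁₂ := rfl
      comm₂₃ := rfl }
  have h := ShortComplex.ShortExact.extClass_naturality (GS1_exact M J q) (czS_exact M q) φ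
  have h1 := Ext.comp_assoc (a := q + 1) (a₁₂ := 1) (GS1_exact M J q).extClass (Ext.mk₀ (gin M J q)) (cze M q)
    (add_zero 1) (zero_add q) (by omega)
  rw [gze, ← h1]
  change (((GS1_exact M J q).extClass.comp (Ext.mk₀ φ.τ₁) _).comp _ _) = _
  rw [h]
  rw [gze, ← Ext.comp_assoc (a₁₂ := 0) (Ext.mk₀ (gbi M J q)) (Ext.mk₀ (gin M J (q + 1)))
    (cze M (q + 1)) (zero_add 0) (zero_add (q + 1)) (by omega), Ext.mk₀_comp_mk₀, cze]
  exact Ext.comp_assoc (a₁₂ := 1) _ _ _ _ _ (by omega)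

lemma GS1_comp {L : ModuleCat.{u} R} (q i j : ℕ) (hj : i + (q + 1) = j)
    (β : Abelian.Ext.{u} L (ModuleCat.of R (GB M J q)) i) :
    (β.comp (GS1_exact M J q).extClass (rfl : i + 1 = i + 1)).comp (gze M J q)
      (by omega : (i + 1) + q = j) =
      (β.comp (Ext.mk₀ (gbi M J q)) (add_zero i)).comp (gze M J (q + 1)) hj := by
  rw [Ext.comp_assoc (a₁₂ := i + 1) (a₂₃ := q + 1) β _ _ rfl (by omega) (by omega), GS1_gze,
    Ext.comp_assoc (a₁₂ := i) (a₂₃ := q + 1) β _ _ (by omega) (by omega) (by omega)]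

lemma gze_up [IsNoetherianRing R] {L : ModuleCat.{u} R} (q i j : ℕ) (hj : (i + 1) + q = j)
    (α : Abelian.Ext.{u} L (GZ M J q) (i + 1)) :
    ∃ β : Abelian.Ext.{u} L (GZ M J (q + 1)) i,
      α.comp (gze M J q) hj = β.comp (gze M J (q + 1)) (by omega) := by
  obtain ⟨β, hβ⟩ := Ext.covariant_sequence_exact₁ L (GS1_exact M J q) α
    (Ext.eq_zero_of_injective (I := GE M J q) _) rfl
  refine ⟨β.comp (Ext.mk₀ (gbi M J q)) (add_zero i), ?_⟩
  rw [← GS1_comp, hβ]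

lemma gze_up_iter [IsNoetherianRing R] {L : ModuleCat.{u} R} (s q i a p j : ℕ) (ha : a = i + s)
    (hp : p = q + s) (hj : a + q = j) (hj' : i + p = j)
    (α : Abelian.Ext.{u} L (GZ M J q) a) :
    ∃ β : Abelian.Ext.{u} L (GZ M J p) i,
      α.comp (gze M J q) hj = β.comp (gze M J p) hj' := by
  induction s generalizing i p with
  | zero =>
    obtain rfl : a = i := by omega
    obtain rfl : p = q := by omega
    exact ⟨α, rfl⟩
  | succ s ih =>
    obtain ⟨β, hβ⟩ := ih (i + 1) (q + s) (by omega) rfl (by omega)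
    obtain ⟨γ, hγ⟩ := gze_up M J (q + s) i j (by omega) β
    obtain rfl : p = q + s + 1 := by omega
    exact ⟨γ, hβ.trans hγ⟩

lemma eln_step [IsNoetherianRing R] (L : ModuleCat.{u} R) (q i : ℕ) :
    eln L (GZ M J q) (i + 2) ≤ eln L (GH M J q) i + eln L (GZ M J (q + 1)) (i + 1) := by
  have h1 : eln L (GZ M J q) (i + 2) ≤ eln L (ModuleCat.of R (GB M J q)) (i + 1) := by
    refine (eln_one L (GS1_exact M J q) (i + 1)).trans ?_
    have : eln L (GE M J q) (i + 2) = 0 := by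
      rw [Module.length_eq_zero_iff]
      exact ⟨fun a b => by rw [Ext.eq_zero_of_injective a, Ext.eq_zero_of_injective b]⟩
    change _ + eln L (GE M J q) (i + 2) ≤ _
    rw [this, add_zero]
  exact h1.trans (eln_one L (subS_exact (GB M J q)) i)

lemma eln_base [IsNoetherianRing R] (L : Type u) [AddCommGroup L] [Module R L] (hL : Gam J L = ⊤)
    (q : ℕ) : eln (ModuleCat.of R L) (GZ M J q) 1 ≤ eln (ModuleCat.of R L) M (q + 1) := by
  refine Module.length_le_of_injective (Ext.postcompOfLinear (gze M J q) R (ModuleCat.of R L)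
    (add_comm 1 q)) ?_
  rw [← LinearMap.ker_eq_bot, LinearMap.ker_eq_bot']
  intro α hα
  obtain ⟨β, rfl⟩ := Ext.covariant_sequence_exact₁ (ModuleCat.of R L) (GS1_exact M J q) α
    (Ext.eq_zero_of_injective (I := GE M J q) _) (zero_add 1)
  obtain ⟨b, rfl⟩ := (Ext.mk₀_bijective _ _).2 β
  have hα' := (GS1_comp M J q 0 (q + 1) (by omega) (Ext.mk₀ b)).symm.trans hα
  rw [Ext.mk₀_comp_mk₀, gze, ← Ext.comp_assoc (a₁₂ := 0) (a₂₃ := q + 1) _ _ _ (by omega) (by omega)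
    (by omega), Ext.mk₀_comp_mk₀] at hα'
  obtain ⟨w, hw⟩ := cze_lift _ M q _ hα'
  have hwt : ∀ x, w.hom x ∈ Gam J (ce M q) := fun x =>
    Gam_map w.hom (by rw [hL]; exact Submodule.mem_top)
  let w' : ModuleCat.of R L ⟶ GE M J q := ModuleCat.ofHom (w.hom.codRestrict _ hwt)
  have hb : b = w' ≫ (GS1 M J q).g := by
    ext x
    exact (congrArg (fun f => f.hom x) hw).symm
  rw [hb]
  have : Ext.mk₀ (w' ≫ (GS1 M J q).g) = (Ext.mk₀ w').comp (Ext.mk₀ (GS1 M J q).g) (zero_add 0) :=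
      (Ext.mk₀_comp_mk₀ _ _).symm
  rw [this, Ext.comp_assoc_of_second_deg_zero, (GS1_exact M J q).comp_extClass, Ext.comp_zero]

/-- upper bound: `q + t + 1 = n - 1` -/
lemma eln_upper [IsNoetherianRing R] (L : Type u) [AddCommGroup L] [Module R L] (hL : Gam J L = ⊤)
    (t n : ℕ) (ht : t + 2 ≤ n) :
    eln (ModuleCat.of R L) (GZ M J (n - t - 2)) (t + 2) ≤ eln (ModuleCat.of R L) M n +
      ∑ i ∈ Finset.range (t + 1), eln (ModuleCat.of R L) (GH M J (n - i - 2)) i := by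
  induction t with
  | zero =>
    refine (eln_step M J _ _ _).trans ?_
    simp only [zero_add, Finset.sum_range_one, Nat.sub_zero]
    rw [add_comm]
    refine add_le_add ?_ le_rfl
    refine (eln_base M J L hL _).trans ?_
    have : n - 2 + 1 + 1 = n := by omega
    rw [this]
  | succ t ih =>
    refine (eln_step M J _ _ _).trans ?_
    rw [Finset.sum_range_succ, add_comm, ← add_assoc]
    refine add_le_add ?_ le_rfl
    have : n - (t + 1) - 2 + 1 = n - t - 2 := by omega
    rw [this]
    exact ih (by omega)

end GExt

section OpHom
open CategoryTheory.Limits Opposite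

variable {R : Type u} [CommRing R]

/-- cocycles -/
abbrev ocC (K : ChainComplex (ModuleCat.{u} R)ᵒᵖ ℕ) (q : ℕ) : Submodule R (K.X q).unop :=
  LinearMap.ker (K.d (q + 1) q).unop.hom

/-- inclusion -/
abbrev oci (K : ChainComplex (ModuleCat.{u} R)ᵒᵖ ℕ) (q : ℕ) :
    ModuleCat.of R (ocC K q) ⟶ (K.X q).unop := ModuleCat.ofHom (ocC K q).subtype

lemma oci_d (K : ChainComplex (ModuleCat.{u} R)ᵒᵖ ℕ) (q : ℕ) :
    K.d (q + 1) q ≫ (oci K q).op = 0 := by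
  apply Quiver.Hom.unop_inj
  ext x
  exact x.2

/-- descent -/
abbrev ock (K : ChainComplex (ModuleCat.{u} R)ᵒᵖ ℕ) (q : ℕ) :
    K.opcycles q ⟶ op (ModuleCat.of R (ocC K q)) :=
  K.descOpcycles (oci K q).op (q + 1) (by simp) (oci_d K q)

instance ock_mono (K : ChainComplex (ModuleCat.{u} R)ᵒᵖ ℕ) (q : ℕ) : Mono (ock K q) := by
  have h0 : K.d (q + 1) q ≫ K.pOpcycles q = 0 := K.d_pOpcycles _ _
  let r : (K.opcycles q).unop ⟶ ModuleCat.of R (ocC K q) :=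
    ModuleCat.ofHom ((K.pOpcycles q).unop.hom.codRestrict _ (fun c => by
      exact congrArg (fun f => f.unop.hom c) h0))
  have hr : r ≫ oci K q = (K.pOpcycles q).unop := by
    ext x; rfl
  have h : ock K q ≫ r.op = 𝟙 _ := by
    rw [← cancel_epi (K.pOpcycles q), K.p_descOpcycles_assoc, ← op_comp, hr]
    simp
  exact mono_of_mono_fac h

/-- the map from homology -/
abbrev ocb (K : ChainComplex (ModuleCat.{u} R)ᵒᵖ ℕ) (q : ℕ) :
    K.homology q ⟶ op (ModuleCat.of R (ocC K q)) := K.homologyι q ≫ ock K q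

lemma ocb_surj (K : ChainComplex (ModuleCat.{u} R)ᵒᵖ ℕ) (q : ℕ) :
    Function.Surjective (ocb K q).unop.hom := by
  have : Epi (ocb K q).unop := unop_epi_of_mono _
  exact (ModuleCat.epi_iff_surjective _).1 this

lemma ocb_ker (K : ChainComplex (ModuleCat.{u} R)ᵒᵖ ℕ) (q : ℕ) (x : ocC K q) :
    (ocb K q).unop.hom x = 0 ↔
      ∃ g : (K.X ((ComplexShape.down ℕ).next q)).unop,
        (K.d q ((ComplexShape.down ℕ).next q)).unop.hom g = x.1 := by
  set j := (ComplexShape.down ℕ).next q with hj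
  let S : ShortComplex (ModuleCat.{u} R)ᵒᵖ :=
    ShortComplex.mk (K.homologyι q) (K.fromOpcycles q j) (K.homologyι_comp_fromOpcycles q j)
  have hS : S.Exact := ShortComplex.exact_of_f_is_kernel _ (K.homologyIsKernel q j hj)
  have hS' := (ShortComplex.moduleCat_exact_iff _).1 hS.unop
  have hp : K.pOpcycles q ≫ ock K q = (oci K q).op := K.p_descOpcycles _ _ _ _
  have hp1 : (K.pOpcycles q).unop.hom ((ock K q).unop.hom x) = x.1 :=
    congrArg (fun f => f.unop.hom x) hp
  have hd : K.pOpcycles q ≫ K.fromOpcycles q j = K.d q j := K.p_fromOpcycles _ _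
  have hd1 : ∀ g, (K.pOpcycles q).unop.hom ((K.fromOpcycles q j).unop.hom g) =
      (K.d q j).unop.hom g := fun g => congrArg (fun f => f.unop.hom g) hd
  constructor
  · intro h
    obtain ⟨g, hg⟩ := hS' ((ock K q).unop.hom x) h
    refine ⟨g, ?_⟩
    exact (hd1 g).symm.trans ((congrArg (K.pOpcycles q).unop.hom hg).trans hp1)
  · rintro ⟨g, hg⟩
    rw [← hd1, ← hp1] at hg
    have : Mono (K.pOpcycles q).unop := unop_mono_of_epi _
    have h2 := (ModuleCat.mono_iff_injective _).1 this hg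
    change (K.homologyι q).unop.hom ((ock K q).unop.hom x) = 0
    rw [← h2]
    exact congrArg (fun f => f.unop.hom g) (K.homologyι_comp_fromOpcycles q j)

/-- map on cocycles -/
abbrev ocm {K L : ChainComplex (ModuleCat.{u} R)ᵒᵖ ℕ} (φ : K ⟶ L) (q : ℕ) :
    ocC L q →ₗ[R] ocC K q :=
  (φ.f q).unop.hom.restrict (fun x hx => by
    have h : φ.f (q + 1) ≫ L.d (q + 1) q = K.d (q + 1) q ≫ φ.f q := φ.comm _ _
    have h1 := congrArg (fun f => f.unop.hom x) h
    have h2 : (φ.f (q + 1)).unop.hom ((L.d (q + 1) q).unop.hom x) = 0 := by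
      rw [LinearMap.mem_ker.1 hx, map_zero]
    exact h1.symm.trans h2)

lemma ocb_nat {K L : ChainComplex (ModuleCat.{u} R)ᵒᵖ ℕ} (φ : K ⟶ L) (q : ℕ) :
    HomologicalComplex.homologyMap φ q ≫ ocb L q = ocb K q ≫ (ModuleCat.ofHom (ocm φ q)).op := by
  rw [ocb, HomologicalComplex.homologyι_naturality_assoc, ocb, Category.assoc]
  congr 1
  rw [← cancel_epi (K.pOpcycles q), HomologicalComplex.p_opcyclesMap_assoc,
    HomologicalComplex.p_descOpcycles, HomologicalComplex.p_descOpcycles_assoc]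
  rfl

end OpHom

section ExtCmp
open CategoryTheory.Limits CategoryTheory.Abelian Opposite

variable {R : Type u} [CommRing R]

/-- hom complex -/
abbrev hK {L : ModuleCat.{u} R} (P : ProjectiveResolution L) (Y : ModuleCat.{u} R) :
    ChainComplex (ModuleCat.{u} R)ᵒᵖ ℕ :=
  (((linearYoneda R (ModuleCat.{u} R)).obj Y).rightOp.mapHomologicalComplex _).obj P.complex

/-- root Ext module -/
abbrev rE (L Y : ModuleCat.{u} R) (q : ℕ) : ModuleCat.{u} R :=
  ((_root_.Ext R (ModuleCat.{u} R) q).obj (op L)).obj Y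

/-- derived functor iso, retyped -/
def ldi {L : ModuleCat.{u} R} (P : ProjectiveResolution L) (Y : ModuleCat.{u} R) (q : ℕ) :
    op (rE L Y q) ≅ (hK P Y).homology q :=
  P.isoLeftDerivedObj ((linearYoneda R (ModuleCat.{u} R)).obj Y).rightOp q

/-- the map from cocycles to the classical Ext -/
def rb {L : ModuleCat.{u} R} (P : ProjectiveResolution L) (Y : ModuleCat.{u} R) (q : ℕ) :
    ModuleCat.of R (ocC (hK P Y) q) ⟶ rE L Y q :=
  ((ldi P Y q).hom ≫ ocb (hK P Y) q).unop

lemma rb_surj {L : ModuleCat.{u} R} (P : ProjectiveResolution L) (Y : ModuleCat.{u} R) (q : ℕ) :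
    Function.Surjective (rb P Y q).hom := by
  have : Mono ((ldi P Y q).hom ≫ ocb (hK P Y) q) := inferInstance
  have : Epi (rb P Y q) := unop_epi_of_mono _
  exact (ModuleCat.epi_iff_surjective _).1 this

lemma rb_ker {L : ModuleCat.{u} R} (P : ProjectiveResolution L) (Y : ModuleCat.{u} R) (q : ℕ)
    (x : ocC (hK P Y) q) : (rb P Y q).hom x = 0 ↔
      ∃ g : P.complex.X ((ComplexShape.down ℕ).next q) ⟶ Y,
        P.complex.d q ((ComplexShape.down ℕ).next q) ≫ g = x.1 := by
  refine Iff.trans ?_ (ocb_ker (hK P Y) q x)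
  have hi : Function.Injective (ldi P Y q).hom.unop.hom := by
    apply (ModuleCat.mono_iff_injective _).1
    infer_instance
  constructor
  · intro h
    apply hi
    exact h.trans (map_zero _).symm
  · intro h
    exact (congrArg (ldi P Y q).hom.unop.hom h).trans (map_zero _)

/-- precomposition on cocycles -/
def ocP {L L' : ModuleCat.{u} R} (P : ProjectiveResolution L) (P' : ProjectiveResolution L')
    (φ : P.complex ⟶ P'.complex) (Y : ModuleCat.{u} R) (q : ℕ) :
    ocC (hK P' Y) q →ₗ[R] ocC (hK P Y) q :=
  ocm ((((linearYoneda R (ModuleCat.{u} R)).obj Y).rightOp.mapHomologicalComplex _).map φ) q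

lemma rb_nat {L L' : ModuleCat.{u} R} (P : ProjectiveResolution L) (P' : ProjectiveResolution L')
    (f : L ⟶ L') (φ : P.complex ⟶ P'.complex) (comm : φ.f 0 ≫ P'.π.f 0 = P.π.f 0 ≫ f)
    (Y : ModuleCat.{u} R) (q : ℕ) (x : ocC (hK P' Y) q) :
    (((_root_.Ext R (ModuleCat.{u} R) q).map f.op).app Y).hom ((rb P' Y q).hom x) =
      (rb P Y q).hom (ocP P P' φ Y q x) := by
  have h : ((((_root_.Ext R (ModuleCat.{u} R) q).map f.op).app Y).op : op (rE L Y q) ⟶ op (rE L' Y q)) ≫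
      (ldi P' Y q).hom = (ldi P Y q).hom ≫ HomologicalComplex.homologyMap
      ((((linearYoneda R (ModuleCat.{u} R)).obj Y).rightOp.mapHomologicalComplex
    (ComplexShape.down ℕ)).map φ) q :=
    ProjectiveResolution.isoLeftDerivedObj_hom_naturality f P P' φ comm
    ((linearYoneda R (ModuleCat.{u} R)).obj Y).rightOp q
  have h2 := ocb_nat ((((linearYoneda R (ModuleCat.{u} R)).obj Y).rightOp.mapHomologicalComplex
    (ComplexShape.down ℕ)).map φ) q
  have h3 : ((((_root_.Ext R (ModuleCat.{u} R) q).map f.op).app Y).op : op (rE L Y q) ⟶ op (rE L' Y q)) ≫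
      ((ldi P' Y q).hom ≫
        ocb (hK P' Y) q) =
      ((ldi P Y q).hom ≫
        ocb (hK P Y) q) ≫ (ModuleCat.ofHom (ocP P P' φ Y q)).op :=
    (Category.assoc _ _ _).symm.trans ((congrArg (· ≫ ocb (hK P' Y) q) h).trans
      ((Category.assoc _ _ _).trans ((congrArg ((ldi P Y q).hom ≫ ·) h2).trans
        (Category.assoc _ _ _).symm)))
  exact congrArg (fun f => f.unop.hom x) h3

lemma oc_mem {L : ModuleCat.{u} R} (P : ProjectiveResolution L) (Y : ModuleCat.{u} R) (q : ℕ)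
    (x : ocC (hK P Y) q) :
    P.complex.d (q + 1) q ≫ (show P.complex.X q ⟶ Y from x.1) = 0 := x.2

/-- cocycles to new Ext -/
def ra {L : ModuleCat.{u} R} (P : ProjectiveResolution L) (Y : ModuleCat.{u} R) (q : ℕ) :
    ocC (hK P Y) q →ₗ[R] Abelian.Ext.{u} L Y q where
  toFun x := P.extMk (show P.complex.X q ⟶ Y from x.1) (q + 1) rfl (oc_mem P Y q x)
  map_add' x y := (P.add_extMk (show P.complex.X q ⟶ Y from x.1)
    (show P.complex.X q ⟶ Y from y.1) (q + 1) rfl (oc_mem P Y q x) (oc_mem P Y q y)).symm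
  map_smul' r x := by
    rw [RingHom.id_apply, Ext.smul_eq_comp_mk₀, ProjectiveResolution.extMk_comp_mk₀]
    congr 1

lemma ra_surj {L : ModuleCat.{u} R} (P : ProjectiveResolution L) (Y : ModuleCat.{u} R) (q : ℕ) :
    Function.Surjective (ra P Y q) := by
  intro α
  obtain ⟨f, hf, rfl⟩ := P.extMk_surjective α (q + 1) rfl
  exact ⟨⟨f, hf⟩, rfl⟩

lemma extMk_zero_inj {L Y : ModuleCat.{u} R} (P : ProjectiveResolution L) (f : P.complex.X 0 ⟶ Y)
    (hf : P.complex.d 1 0 ≫ f = 0) (h : P.extMk f 1 rfl hf = 0) : f = 0 := by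
  rw [← P.extEquivCohomologyClass.apply_eq_iff_eq, P.extEquivCohomologyClass_extMk,
    P.extEquivCohomologyClass_zero, CochainComplex.HomComplex.CohomologyClass.mk_eq_zero_iff,
    CochainComplex.HomComplex.Cocycle.toSingleMk_mem_coboundaries_iff _ _ _ _ _ 1 (by simp)] at h
  obtain ⟨g, hg⟩ := h
  have hz : IsZero (P.cochainComplex.X 1) :=
    P.complex.isZero_extend_X ComplexShape.embeddingDownNat 1 (by
      intro i hi
      have h2 : (ComplexShape.embeddingDownNat.f i : ℤ) = -(i : ℤ) := rfl
      rw [h2] at hi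
      omega)
  rw [hz.eq_of_src g 0, comp_zero] at hg
  rw [← cancel_epi (P.cochainComplexXIso (-(0 : ℕ)) 0 rfl).hom, comp_zero]
  exact hg.symm

lemma ra_ker {L : ModuleCat.{u} R} (P : ProjectiveResolution L) (Y : ModuleCat.{u} R) (q : ℕ)
    (x : ocC (hK P Y) q) : ra P Y q x = 0 ↔
      ∃ g : P.complex.X ((ComplexShape.down ℕ).next q) ⟶ Y,
        P.complex.d q ((ComplexShape.down ℕ).next q) ≫ g = x.1 := by
  cases q with
  | zero =>
    have h0 : P.complex.d 0 ((ComplexShape.down ℕ).next 0) = 0 := P.complex.shape _ _ (by simp)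
    constructor
    · intro h
      refine ⟨0, ?_⟩
      rw [comp_zero]
      exact (extMk_zero_inj P (show P.complex.X 0 ⟶ Y from x.1) (oc_mem P Y 0 x) h).symm
    · rintro ⟨g, hg⟩
      rw [h0, zero_comp] at hg
      have : x = 0 := Subtype.ext hg.symm
      rw [this, map_zero]
  | succ q =>
    have : (ComplexShape.down ℕ).next (q + 1) = q := by simp
    rw [this]
    exact P.extMk_eq_zero_iff _ (q + 1 + 1) rfl (oc_mem P Y (q + 1) x) q rfl

lemma ra_nat {L L' : ModuleCat.{u} R} (P : ProjectiveResolution L) (P' : ProjectiveResolution L')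
    (f : L ⟶ L') (φ : P.complex ⟶ P'.complex) (comm : φ.f 0 ≫ P'.π.f 0 = P.π.f 0 ≫ f)
    (Y : ModuleCat.{u} R) (q : ℕ) (x : ocC (hK P' Y) q) :
    (Ext.mk₀ f).comp (ra P' Y q x) (zero_add q) = ra P Y q (ocP P P' φ Y q x) := by
  let Φ : ProjectiveResolution.Hom P P' f := ⟨φ, by
    rw [comm]; simp⟩
  exact ProjectiveResolution.mk₀_comp_extMk _ _ rfl (oc_mem P' Y q x) Φ

/-- comparison of Ext -/
def extE (L Y : ModuleCat.{u} R) (q : ℕ) : Abelian.Ext.{u} L Y q ≃ₗ[R] rE L Y q :=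
  ((ra (projectiveResolution L) Y q).quotKerEquivOfSurjective (ra_surj _ Y q)).symm ≪≫ₗ
    (Submodule.quotEquivOfEq _ _ (by
      ext x
      rw [LinearMap.mem_ker, LinearMap.mem_ker, ra_ker, rb_ker])) ≪≫ₗ
    ((rb (projectiveResolution L) Y q).hom.quotKerEquivOfSurjective (rb_surj _ Y q))

lemma extE_ra (L Y : ModuleCat.{u} R) (q : ℕ) (x) :
    extE L Y q (ra (projectiveResolution L) Y q x) = (rb (projectiveResolution L) Y q).hom x := by
  have : ((ra (projectiveResolution L) Y q).quotKerEquivOfSurjective (ra_surj _ Y q)).symm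
      (ra (projectiveResolution L) Y q x) = Submodule.Quotient.mk x := by
    rw [LinearEquiv.symm_apply_eq]; rfl
  simp only [extE, LinearEquiv.trans_apply, this]
  rfl

lemma extE_nat {L L' : ModuleCat.{u} R} (f : L ⟶ L') (Y : ModuleCat.{u} R) (q : ℕ)
    (x : Abelian.Ext.{u} L' Y q) :
    (((_root_.Ext R (ModuleCat.{u} R) q).map f.op).app Y).hom (extE L' Y q x) =
      extE L Y q ((Ext.mk₀ f).comp x (zero_add q)) := by
  obtain ⟨y, rfl⟩ := ra_surj (projectiveResolution L') Y q x
  have hc := ProjectiveResolution.lift_commutes_zero f (projectiveResolution L)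
    (projectiveResolution L')
  rw [extE_ra, ra_nat _ _ f _ hc, extE_ra]
  exact rb_nat _ _ f _ hc Y q y

end ExtCmp

section LC
open CategoryTheory.Limits CategoryTheory.Abelian Opposite

variable {R : Type u} [CommRing R]

/-- transition map -/
abbrev tq (I : Ideal R) {s s' : ℕ} (h : s ≤ s') :
    ModuleCat.of R (R ⧸ I ^ s') ⟶ ModuleCat.of R (R ⧸ I ^ s) :=
  ModuleCat.ofHom (Submodule.mapQ _ _ LinearMap.id (Ideal.pow_le_pow_right h))

/-- the diagram evaluated -/
def lcD (I : Ideal R) (q : ℕ) (M : ModuleCat.{u} R) : ℕᵒᵖᵒᵖ ⥤ ModuleCat.{u} R :=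
  localCohomology.diagram (localCohomology.idealPowersDiagram I) q ⋙ (evaluation _ _).obj M

/-- iso with colimit -/
def lcIso (I : Ideal R) (q : ℕ) (M : ModuleCat.{u} R) :
    (localCohomology I q).obj M ≅ colimit (lcD I q M) :=
  colimitObjIsoColimitCompEvaluation _ _

/-- transition on Ext -/
abbrev tE (I : Ideal R) (q : ℕ) (M : ModuleCat.{u} R) {s s' : ℕ} (h : s ≤ s') :
    Abelian.Ext.{u} (ModuleCat.of R (R ⧸ I ^ s)) M q →
      Abelian.Ext.{u} (ModuleCat.of R (R ⧸ I ^ s')) M q :=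
  fun x => (Ext.mk₀ (tq I h)).comp x (zero_add q)

/-- comparison, retyped -/
def lce (I : Ideal R) (q : ℕ) (M : ModuleCat.{u} R) (s : ℕ) :
    Abelian.Ext.{u} (ModuleCat.of R (R ⧸ I ^ s)) M q ≃ₗ[R] (lcD I q M).obj (op (op s)) :=
  extE (ModuleCat.of R (R ⧸ I ^ s)) M q

instance lcD_pres (I : Ideal R) (q : ℕ) (M : ModuleCat.{u} R) :
    PreservesColimit (lcD I q M) (forget (ModuleCat.{u} R)) := by
  have : PreservesFilteredColimitsOfSize.{0, 0} (forget (ModuleCat.{u} R)) :=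
    preservesFilteredColimitsOfSize_shrink.{0, u, 0, u} _
  have := this.preserves_filtered_colimits ℕᵒᵖᵒᵖ
  infer_instance

lemma lcD_map (I : Ideal R) (q : ℕ) (M : ModuleCat.{u} R) {s s' : ℕ} (h : s ≤ s')
    (w : op (op s) ⟶ op (op s'))
    (x : Abelian.Ext.{u} (ModuleCat.of R (R ⧸ I ^ s)) M q) :
    ((lcD I q M).map w).hom (lce I q M s x) = lce I q M s' (tE I q M h x) :=
  extE_nat (tq I h) M q x

/-- structure map -/
def lci (I : Ideal R) (q : ℕ) (M : ModuleCat.{u} R) (s : ℕ) :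
    Abelian.Ext.{u} (ModuleCat.of R (R ⧸ I ^ s)) M q →ₗ[R] (localCohomology I q).obj M :=
  (colimit.ι (lcD I q M) (op (op s)) ≫ (lcIso I q M).inv).hom ∘ₗ (lce I q M s).toLinearMap

lemma lci_apply (I : Ideal R) (q : ℕ) (M : ModuleCat.{u} R) (s : ℕ) (x) :
    lci I q M s x = (lcIso I q M).inv.hom ((colimit.ι (lcD I q M) (op (op s))).hom (lce I q M s x)) :=
  rfl

lemma lci_compat (I : Ideal R) (q : ℕ) (M : ModuleCat.{u} R) {s s' : ℕ} (h : s ≤ s') (x) :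
    lci I q M s' (tE I q M h x) = lci I q M s x := by
  let w : op (op s) ⟶ op (op s') := (homOfLE h).op.op
  rw [lci_apply, lci_apply, ← lcD_map I q M h w]
  congr 1
  exact congrArg (fun f => f.hom (lce I q M s x)) (colimit.w (lcD I q M) w)

lemma lci_surj (I : Ideal R) (q : ℕ) (M : ModuleCat.{u} R) (w) :
    ∃ s x, lci I q M s x = w := by
  obtain ⟨j, y, hy⟩ := Concrete.colimit_exists_rep (lcD I q M) ((lcIso I q M).hom.hom w)
  obtain ⟨⟨s⟩⟩ := j
  obtain ⟨x, rfl⟩ := (lce I q M s).surjective y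
  refine ⟨s, x, ?_⟩
  rw [lci_apply]
  refine (congrArg (lcIso I q M).inv.hom hy).trans ?_
  exact congrArg (fun f => f.hom w) (lcIso I q M).hom_inv_id

lemma lci_zero (I : Ideal R) (q : ℕ) (M : ModuleCat.{u} R) (s : ℕ) (x)
    (hx : lci I q M s x = 0) : ∃ s', ∃ h : s ≤ s', tE I q M h x = 0 := by
  rw [lci_apply] at hx
  have h1 : (colimit.ι (lcD I q M) (op (op s))).hom (lce I q M s x) = 0 := by
    have := congrArg (lcIso I q M).hom.hom hx
    rw [map_zero] at this
    rw [← this]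
    exact (congrArg (fun f => f.hom ((colimit.ι (lcD I q M) (op (op s))).hom (lce I q M s x)))
      (lcIso I q M).inv_hom_id).symm
  have h2 : (colimit.ι (lcD I q M) (op (op s))).hom (lce I q M s x) =
    (colimit.ι (lcD I q M) (op (op s))).hom 0 := by rw [h1, map_zero]
  obtain ⟨⟨⟨s'⟩⟩, f, g, hfg⟩ := Concrete.colimit_exists_of_rep_eq (lcD I q M) _ _ h2
  have hs : s ≤ s' := f.unop.unop.down.down
  refine ⟨s', hs, (lce I q M s').injective ?_⟩
  rw [map_zero, ← lcD_map I q M hs f]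
  exact hfg.trans (map_zero _)

end LC

section LC2
open CategoryTheory.Limits CategoryTheory.Abelian Opposite

variable {R : Type u} [CommRing R]

/-- the map from a cyclic module -/
abbrev cyc {Z : ModuleCat.{u} R} (K : Ideal R) (z : Z) (h : ∀ a ∈ K, a • z = 0) :
    ModuleCat.of R (R ⧸ K) ⟶ Z :=
  ModuleCat.ofHom (Submodule.liftQ K (LinearMap.toSpanSingleton R Z z) (fun a ha => h a ha))

lemma cyc_ext {Z : ModuleCat.{u} R} (K : Ideal R) (f g : ModuleCat.of R (R ⧸ K) ⟶ Z)
    (h : f.hom (Submodule.Quotient.mk 1) = g.hom (Submodule.Quotient.mk 1)) : f = g := by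
  refine ModuleCat.hom_ext (LinearMap.ext fun x => ?_)
  have h2 : ∀ f : ModuleCat.of R (R ⧸ K) ⟶ Z, ∀ a : R,
      f.hom (Submodule.Quotient.mk a) = a • f.hom (Submodule.Quotient.mk 1) := by
    intro f a
    have h3 : (Submodule.Quotient.mk a : R ⧸ K) = a • (Submodule.Quotient.mk 1 : R ⧸ K) := by
      rw [← Submodule.Quotient.mk_smul, smul_eq_mul, mul_one]
    exact (congrArg f.hom h3).trans (map_smul f.hom a _)
  obtain ⟨a, rfl⟩ := Submodule.Quotient.mk_surjective _ x
  exact (h2 f a).trans ((congrArg (a • ·) h).trans (h2 g a).symm)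

lemma cyc_one {Z : ModuleCat.{u} R} (K : Ideal R) (z : Z) (h : ∀ a ∈ K, a • z = 0) :
    (cyc K z h).hom (Submodule.Quotient.mk 1) = z := one_smul R z

/-- class of an element -/
def cyE (M : ModuleCat.{u} R) (q : ℕ) (K : Ideal R) (z : cz M q) (h : ∀ a ∈ K, a • z = 0) :
    Abelian.Ext.{u} (ModuleCat.of R (R ⧸ K)) M q := (Ext.mk₀ (cyc K z h)).comp (cze M q) (zero_add q)

variable (I : Ideal R) (M : ModuleCat.{u} R) (q : ℕ)

lemma cyE_tE {s s' : ℕ} (hs : s ≤ s') (z : cz M q) (h : ∀ a ∈ I ^ s, a • z = 0)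
    (h' : ∀ a ∈ I ^ s', a • z = 0) :
    tE I q M hs (cyE M q _ z h) = cyE M q _ z h' := by
  rw [cyE, cyE, tE, ← Ext.comp_assoc (a₁₂ := 0) (a₂₃ := q) _ _ _ (by omega) (by omega) (by omega),
    Ext.mk₀_comp_mk₀]
  congr 2
  apply cyc_ext
  exact (cyc_one _ z h).trans (cyc_one _ z h').symm

lemma cyE_lci (s s' : ℕ) (z : cz M q) (h : ∀ a ∈ I ^ s, a • z = 0)
    (h' : ∀ a ∈ I ^ s', a • z = 0) :
    lci I q M s (cyE M q _ z h) = lci I q M s' (cyE M q _ z h') := by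
  wlog hs : s ≤ s' generalizing s s'
  · exact (this s' s h' h (by omega)).symm
  rw [← cyE_tE I M q hs z h h', lci_compat]

lemma cyE_add (K : Ideal R) (z z' : cz M q) (h : ∀ a ∈ K, a • z = 0) (h' : ∀ a ∈ K, a • z' = 0)
    (h'' : ∀ a ∈ K, a • (z + z') = 0) :
    cyE M q K (z + z') h'' = cyE M q K z h + cyE M q K z' h' := by
  rw [cyE, cyE, cyE, ← Ext.add_comp, ← Ext.mk₀_add]
  congr 2
  apply cyc_ext
  rw [cyc_one, ModuleCat.hom_add, LinearMap.add_apply, cyc_one, cyc_one]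

lemma cyE_smul (K : Ideal R) (r : R) (z : cz M q) (h : ∀ a ∈ K, a • z = 0)
    (h'' : ∀ a ∈ K, a • (r • z) = 0) :
    cyE M q K (r • z) h'' = r • cyE M q K z h := by
  rw [cyE, cyE, ← Ext.smul_comp, ← Ext.mk₀_smul]
  congr 2
  apply cyc_ext
  rw [cyc_one, ModuleCat.hom_smul, LinearMap.smul_apply, cyc_one]

variable [IsNoetherianRing R]

lemma lcpsi_spec' (z : Gam I (cz M q)) : ∃ s, ∀ a ∈ I ^ s, a • (z : cz M q) = 0 := Gam_exists_pow z.2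

/-- the comparison map -/
def lcpsi : Gam I (cz M q) →ₗ[R] (localCohomology I q).obj M where
  toFun z := lci I q M _ (cyE M q _ z.1 (lcpsi_spec' I M q z).choose_spec)
  map_add' x y := by
    have h1 := (lcpsi_spec' I M q x).choose_spec
    have h2 := (lcpsi_spec' I M q y).choose_spec
    set s := (lcpsi_spec' I M q x).choose
    set s' := (lcpsi_spec' I M q y).choose
    have h1' : ∀ a ∈ I ^ (max s s'), a • x.1 = 0 :=
      fun a ha => h1 a (Ideal.pow_le_pow_right (le_max_left _ _) ha)
    have h2' : ∀ a ∈ I ^ (max s s'), a • y.1 = 0 :=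
      fun a ha => h2 a (Ideal.pow_le_pow_right (le_max_right _ _) ha)
    have h3' : ∀ a ∈ I ^ (max s s'), a • (x.1 + y.1) = 0 :=
      fun a ha => by rw [smul_add, h1' a ha, h2' a ha, add_zero]
    rw [cyE_lci I M q s _ _ h1 h1', cyE_lci I M q s' _ _ h2 h2', ← map_add,
      ← cyE_add M q _ _ _ h1' h2' h3']
    exact cyE_lci I M q _ _ _ _ _
  map_smul' r x := by
    have h1 := (lcpsi_spec' I M q x).choose_spec
    have h3' : ∀ a ∈ I ^ (lcpsi_spec' I M q x).choose, a • (r • x.1) = 0 :=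
      fun a ha => by rw [smul_comm, h1 a ha, smul_zero]
    rw [RingHom.id_apply, ← map_smul, ← cyE_smul M q _ _ _ h1 h3']
    exact cyE_lci I M q _ _ _ _ _

lemma lcpsi_apply (z : Gam I (cz M q)) (s : ℕ) (h : ∀ a ∈ I ^ s, a • z.1 = 0) :
    lcpsi I M q z = lci I q M s (cyE M q _ z.1 h) := cyE_lci I M q _ _ _ _ _

lemma lcpsi_surj : Function.Surjective (lcpsi I M q) := by
  intro w
  obtain ⟨s, x, rfl⟩ := lci_surj I q M w
  obtain ⟨y, rfl⟩ := cze_surj _ M q 0 q (zero_add q) x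
  obtain ⟨f, rfl⟩ := (Ext.mk₀_bijective _ _).2 y
  have h : ∀ a ∈ I ^ s, a • f.hom (Submodule.Quotient.mk 1) = 0 := by
    intro a ha
    have : a • (Submodule.Quotient.mk 1 : R ⧸ I ^ s) = 0 := by
      rw [← Submodule.Quotient.mk_smul, smul_eq_mul, mul_one, Submodule.Quotient.mk_eq_zero]
      exact ha
    exact (map_smul f.hom a _).symm.trans ((congrArg f.hom this).trans (map_zero f.hom))
  refine ⟨⟨f.hom (Submodule.Quotient.mk 1), Gam_of_pow s h⟩, ?_⟩
  rw [lcpsi_apply I M q _ s h, cyE]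
  congr 3
  apply cyc_ext
  rw [cyc_one]

lemma lcpsi_ker : LinearMap.ker (lcpsi I M (q + 1)) = GB M I q := by
  ext z
  rw [LinearMap.mem_ker]
  obtain ⟨s, hs⟩ := Gam_exists_pow z.2
  constructor
  · intro h
    rw [lcpsi_apply I M (q + 1) z s hs] at h
    obtain ⟨s', hs', h⟩ := lci_zero _ _ _ _ _ h
    have hz : ∀ a ∈ I ^ s', a • z.1 = 0 := fun a ha => hs a (Ideal.pow_le_pow_right hs' ha)
    rw [cyE_tE I M (q + 1) hs' z.1 hs hz] at h
    obtain ⟨w, hw⟩ := cze_lift _ M q _ h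
    have hw1 : ∀ a ∈ I ^ s', a • w.hom (Submodule.Quotient.mk 1) = 0 := by
      intro a ha
      have : a • (Submodule.Quotient.mk 1 : R ⧸ I ^ s') = 0 := by
        rw [← Submodule.Quotient.mk_smul, smul_eq_mul, mul_one, Submodule.Quotient.mk_eq_zero]
        exact ha
      exact (map_smul w.hom a _).symm.trans ((congrArg w.hom this).trans (map_zero w.hom))
    refine ⟨⟨w.hom (Submodule.Quotient.mk 1), Gam_of_pow s' hw1⟩, Subtype.ext ?_⟩
    refine Eq.trans ?_ (cyc_one _ z.1 hz)
    exact congrArg (fun f => f.hom (Submodule.Quotient.mk 1)) hw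
  · rintro ⟨e, rfl⟩
    obtain ⟨s', hs'⟩ := Gam_exists_pow e.2
    have hz : ∀ a ∈ I ^ s', a • ((Gmap I (czp M q).hom) e).1 = 0 := by
      intro a ha
      exact (map_smul (czp M q).hom a e.1).symm.trans
        ((congrArg (czp M q).hom (hs' a ha)).trans (map_zero _))
    rw [lcpsi_apply I M (q + 1) _ s' hz]
    have h1 : cyc (I ^ s') ((Gmap I (czp M q).hom) e).1 hz = cyc (I ^ s') e.1 hs' ≫ (czS M q).g := by
      apply cyc_ext
      refine (cyc_one _ _ hz).trans ?_
      exact (congrArg (czp M q).hom (cyc_one _ e.1 hs')).symm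
    rw [cyE, h1, cze_zero, map_zero]

/-- the comparison -/
def lcGH : GH M I q ≅ (localCohomology I (q + 1)).obj M :=
  LinearEquiv.toModuleIso ((Submodule.quotEquivOfEq _ _ (lcpsi_ker I M q).symm) ≪≫ₗ
    (lcpsi I M (q + 1)).quotKerEquivOfSurjective (lcpsi_surj I M (q + 1)))

lemma lyub_eq [IsLocalRing R] (n i : ℕ) (h : i + 2 ≤ n) :
    lyubeznikNumber R I n i (i + 1) =
      ((eln (ModuleCat.of R (ResidueField R)) (GH (ModuleCat.of R R) I (n - i - 2)) i : ℕ∞) :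
        WithBot ℕ∞) := by
  rw [lyubeznikNumber, ← Module.coe_length, eln]
  obtain ⟨q, hq⟩ : ∃ q, n - i - 2 = q := ⟨_, rfl⟩
  have h2 : n - (i + 1) = q + 1 := by omega
  rw [hq, lyubeznikModule, h2]
  congr 1
  refine LinearEquiv.length_eq ?_
  refine (extE _ _ i).symm ≪≫ₗ ?_
  refine LinearEquiv.ofLinearMap
    (Ext.postcompOfLinear (Ext.mk₀ (lcGH I (ModuleCat.of R R) q).inv) R _ (add_zero i))
    (Ext.postcompOfLinear (Ext.mk₀ (lcGH I (ModuleCat.of R R) q).hom) R _ (add_zero i)) ?_ ?_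
  · ext x
    change (x.comp (Ext.mk₀ _) (add_zero i)).comp (Ext.mk₀ _) (add_zero i) = x
    rw [Ext.comp_assoc_of_second_deg_zero, Ext.mk₀_comp_mk₀, Iso.hom_inv_id, Ext.comp_mk₀_id]
  · ext x
    change (x.comp (Ext.mk₀ _) (add_zero i)).comp (Ext.mk₀ _) (add_zero i) = x
    rw [Ext.comp_assoc_of_second_deg_zero, Ext.mk₀_comp_mk₀, Iso.inv_hom_id, Ext.comp_mk₀_id]

end LC2

section Reg

/-- ideals generated by regular sequences in the maximal ideal -/
inductive RC {R : Type u} [CommRing R] [IsLocalRing R] : ℕ → Ideal R → Prop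
  | zero : RC 0 ⊥
  | succ (i : ℕ) (K : Ideal R) (f : R) : RC i K → f ∈ maximalIdeal R → (∀ a, f * a ∈ K → a ∈ K) →
      RC (i + 1) (K ⊔ Ideal.span {f})

lemma RC_comap {R S : Type u} [CommRing R] [IsLocalRing R] [CommRing S] [IsLocalRing S]
    (g : R →+* S) (hg : Function.Surjective g) (x : R) (hx : RingHom.ker g = Ideal.span {x})
    (hxm : x ∈ maximalIdeal R) (hxr : ∀ a, x * a = 0 → a = 0) (i : ℕ) (K : Ideal S)
    (h : RC i K) : RC (i + 1) (K.comap g) := by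
  have hloc : IsLocalHom g := IsLocalHom.of_surjective g hg
  induction h with
  | zero =>
    have := RC.succ 0 (⊥ : Ideal R) x RC.zero hxm (by simpa using hxr)
    rw [bot_sup_eq, ← hx] at this
    exact this
  | succ i K f h hf hr ih =>
    obtain ⟨f, rfl⟩ := hg f
    have := RC.succ (i + 1) _ f ih (by
      by_contra hc
      have h1 : IsUnit f := by simpa using hc
      exact hf (h1.map g)) (by
      intro a ha
      apply hr
      rw [← map_mul]; exact ha)
    have h2 : Ideal.comap g (K ⊔ Ideal.span {g f}) = Ideal.comap g K ⊔ Ideal.span {f} := by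
      have h3 : K ⊔ Ideal.span {g f} = Ideal.map g (Ideal.comap g K ⊔ Ideal.span {f}) := by
        rw [Ideal.map_sup, Ideal.map_comap_of_surjective g hg, Ideal.map_span, Set.image_singleton]
      rw [h3, Ideal.comap_map_of_surjective g hg, sup_eq_left]
      exact le_trans (Ideal.comap_mono bot_le) le_sup_left
    rw [h2]
    exact this

lemma gens_dim_le {R : Type u} [CommRing R] [IsLocalRing R] [IsNoetherianRing R] (s : Finset R)
    (n : ℕ) (hn : s.card ≤ n) (hs : Ideal.span (s : Set R) = maximalIdeal R) :
    ringKrullDim R ≤ (n : ℕ) := by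
  refine (ringKrullDim_le_spanFinrank_maximalIdeal R).trans ?_
  have h : (maximalIdeal R).spanFinrank ≤ n := by
    rw [← hs]
    refine (Submodule.spanFinrank_span_le_ncard_of_finite (R := R) s.finite_toSet).trans ?_
    rwa [Set.ncard_coe_finset]
  exact_mod_cast h

lemma reg_main (n : ℕ) : ∀ (R : Type u) [CommRing R] [IsLocalRing R] [IsNoetherianRing R]
    (s : Finset R), s.card ≤ n → Ideal.span (s : Set R) = maximalIdeal R →
    ((n : ℕ) : WithBot ℕ∞) ≤ ringKrullDim R → (IsDomain R ∧ RC n (maximalIdeal R)) := by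
  classical
  induction n with
  | zero =>
    intro R _ _ _ s hs hspan hdim
    have : s = ∅ := by simpa using hs
    subst this
    have hm : maximalIdeal R = ⊥ := by rw [← hspan]; simp
    refine ⟨?_, hm ▸ RC.zero⟩
    exact ((IsLocalRing.isField_iff_maximalIdeal_eq).2 hm).isDomain
  | succ n ih =>
    intro R _ _ _ s hs hspan hdim
    -- choose x
    have hne : maximalIdeal R ≠ ⊥ := by
      intro h
      have hf : ringKrullDim R ≤ ((0 : ℕ) : WithBot ℕ∞) :=
        gens_dim_le (∅ : Finset R) 0 (by simp) (by rw [h]; simp)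
      have := hdim.trans hf
      norm_cast at this
    have hsq : ¬ maximalIdeal R ≤ maximalIdeal R ^ 2 := by
      intro h
      apply hne
      refine Submodule.eq_bot_of_le_smul_of_le_jacobson_bot (maximalIdeal R) _
        (IsNoetherian.noetherian _) ?_ (IsLocalRing.maximalIdeal_le_jacobson _)
      rwa [smul_eq_mul, ← pow_two]
    have hfin := minimalPrimes.finite_of_isNoetherianRing R
    obtain ⟨x, hxm, hx2, hxp⟩ : ∃ x ∈ maximalIdeal R, x ∉ maximalIdeal R ^ 2 ∧
        ∀ p ∈ minimalPrimes R, x ∉ p := by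
      by_contra! hc
      have h1 : ((maximalIdeal R : Ideal R) : Set R) ⊆
          ⋃ i ∈ ((insert (maximalIdeal R ^ 2) hfin.toFinset : Finset (Ideal R)) : Set (Ideal R)), (id i : Ideal R) := by
        intro x hx
        by_cases h : x ∈ maximalIdeal R ^ 2
        · exact Set.mem_biUnion (by simp) h
        · obtain ⟨p, hp, hxp⟩ := hc x hx h
          refine Set.mem_biUnion (x := p) ?_ hxp
          simp [hp]
      rw [Ideal.subset_union_prime (maximalIdeal R ^ 2) (maximalIdeal R ^ 2)] at h1
      · obtain ⟨i, hi, hle⟩ := h1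
        rw [Finset.mem_insert, Set.Finite.mem_toFinset] at hi
        rcases hi with rfl | hi
        · exact hsq hle
        · have hip : i.IsPrime := hi.1.1
          have : i = maximalIdeal R := le_antisymm (IsLocalRing.le_maximalIdeal hip.ne_top) hle
          subst this
          have hh : (maximalIdeal R).height = 0 := by
            rw [Ideal.height_eq_zero_iff]; exact hi
          have := IsLocalRing.maximalIdeal_height_eq_ringKrullDim (R := R)
          rw [hh] at this
          rw [← this] at hdim
          norm_cast at hdim
      · intro i hi h1 _
        rw [Finset.mem_insert, Set.Finite.mem_toFinset] at hi
        rcases hi with rfl | hi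
        · exact absurd rfl h1
        · exact hi.1.1
    -- replace generator
    obtain ⟨y, hys, hy⟩ : ∃ y ∈ s, maximalIdeal R ≤
        Ideal.span {x} ⊔ Ideal.span ((s.erase y : Finset R) : Set R) := by
      rw [← hspan] at hxm
      obtain ⟨c, -, hc⟩ := Submodule.mem_span_finset.1 hxm
      have hu : ∃ y ∈ s, IsUnit (c y) := by
        by_contra! hcu
        apply hx2
        rw [← hc, pow_two]
        refine Ideal.sum_mem _ (fun y hy => ?_)
        refine Ideal.mul_mem_mul ((IsLocalRing.mem_maximalIdeal _).2 (hcu y hy)) ?_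
        rw [← hspan]
        exact Ideal.subset_span hy
      obtain ⟨y, hy, hyu⟩ := hu
      refine ⟨y, hy, ?_⟩
      rw [← hspan, Ideal.span_le]
      intro z hz
      by_cases hzy : z = y
      · subst hzy
        rw [← Finset.add_sum_erase _ _ hy] at hc
        have h1 : c z * z ∈ Ideal.span {x} ⊔ Ideal.span ((s.erase z : Finset R) : Set R) := by
          rw [show c z * z = x - ∑ a ∈ s.erase z, c a • a from eq_sub_of_add_eq hc]
          refine Ideal.sub_mem _ (Ideal.mem_sup_left (Ideal.mem_span_singleton_self x))
            (Ideal.mem_sup_right (Ideal.sum_mem _ (fun a ha => ?_)))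
          exact Ideal.mul_mem_left _ _ (Ideal.subset_span ha)
        exact (Ideal.unit_mul_mem_iff_mem _ hyu).1 h1
      · exact Ideal.mem_sup_right (Ideal.subset_span (by simp [hzy]; exact hz))
    have hxne : Ideal.span {x} ≠ (⊤ : Ideal R) := by
      intro h
      rw [Ideal.span_singleton_eq_top] at h
      exact hxm h
    have : Nontrivial (R ⧸ Ideal.span {x}) := Ideal.Quotient.nontrivial_iff.2 hxne
    have : IsLocalRing (R ⧸ Ideal.span {x}) :=
      IsLocalRing.of_surjective' (Ideal.Quotient.mk _) Ideal.Quotient.mk_surjective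
    have hmk : IsLocalHom (Ideal.Quotient.mk (Ideal.span {x})) :=
      IsLocalHom.of_surjective _ Ideal.Quotient.mk_surjective
    have hcm : (maximalIdeal (R ⧸ Ideal.span {x})).comap (Ideal.Quotient.mk (Ideal.span {x})) =
        maximalIdeal R := ((IsLocalRing.local_hom_TFAE (Ideal.Quotient.mk (Ideal.span {x}))).out 0 4).1 hmk
    have hmm : maximalIdeal (R ⧸ Ideal.span {x}) =
        (maximalIdeal R).map (Ideal.Quotient.mk (Ideal.span {x})) := by
      rw [← hcm, Ideal.map_comap_of_surjective _ Ideal.Quotient.mk_surjective]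
    have hd : ((n : ℕ) : WithBot ℕ∞) ≤ ringKrullDim (R ⧸ Ideal.span {x}) := by
      have h1 := ringKrullDim_le_ringKrullDim_quotient_add_card (R := R) {x} (by
        simpa [IsLocalRing.ringJacobson_eq_maximalIdeal] using hxm)
      rw [Finset.coe_singleton, Finset.card_singleton] at h1
      have h2 := hdim.trans h1
      push_cast at h2
      exact ENat.WithBot.add_le_add_natCast_right_iff.mp h2
    obtain ⟨hdom, hRC⟩ := ih (R ⧸ Ideal.span {x}) ((s.erase y).image (Ideal.Quotient.mk (Ideal.span {x})))
      (Finset.card_image_le.trans (by rw [Finset.card_erase_of_mem hys]; omega)) (by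
        rw [hmm, Finset.coe_image, ← Ideal.map_span]
        apply le_antisymm
        · apply Ideal.map_mono
          rw [← hspan]
          exact Ideal.span_mono (by simp)
        · refine (Ideal.map_mono hy).trans ?_
          rw [Ideal.map_sup, Ideal.map_quotient_self, bot_sup_eq]) hd
    have hxprime : (Ideal.span {x} : Ideal R).IsPrime := (Ideal.Quotient.isDomain_iff_prime _).1 hdom
    obtain ⟨q, hq, hqx⟩ := Ideal.exists_minimalPrimes_le (I := (⊥ : Ideal R)) (J := Ideal.span {x}) bot_le
    have hqp : q.IsPrime := hq.1.1
    have hq0 : q = ⊥ := by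
      refine Submodule.eq_bot_of_le_smul_of_le_jacobson_bot (maximalIdeal R) _
        (IsNoetherian.noetherian _) ?_ (IsLocalRing.maximalIdeal_le_jacobson _)
      intro a ha
      obtain ⟨b, rfl⟩ := Ideal.mem_span_singleton'.1 (hqx ha)
      rw [mul_comm]
      exact Submodule.smul_mem_smul hxm ((hqp.mem_or_mem ha).resolve_right (hxp q hq))
    have hRdom : IsDomain R := by
      subst hq0
      exact (IsDomain.of_bot_isPrime R)
    refine ⟨hRdom, ?_⟩
    have hx0 : x ≠ 0 := fun h => hx2 (h ▸ Ideal.zero_mem _)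
    have := RC_comap (Ideal.Quotient.mk (Ideal.span {x})) Ideal.Quotient.mk_surjective x
      Ideal.mk_ker hxm (fun a ha => (mul_eq_zero.1 ha).resolve_left hx0) n _ hRC
    rwa [hcm] at this

end Reg

section EVsec
open CategoryTheory.Abelian CategoryTheory.Limits

variable {R : Type u} [CommRing R]

/-- vanishing of Ext -/
abbrev EV (L Y : ModuleCat.{u} R) (i : ℕ) : Prop := ∀ x : Abelian.Ext.{u} L Y i, x = 0

lemma EV_retract {L L' Y : ModuleCat.{u} R} {i : ℕ} (a : L ⟶ L') (b : L' ⟶ L) (hab : a ≫ b = 𝟙 L)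
    (h : EV L' Y i) : EV L Y i := by
  intro x
  have : x = (Ext.mk₀ a).comp ((Ext.mk₀ b).comp x (zero_add i)) (zero_add i) := by
    rw [← Ext.comp_assoc (a₁₂ := 0) (a₂₃ := i) _ _ _ (zero_add 0) (zero_add i) (by omega),
      Ext.mk₀_comp_mk₀, hab, Ext.mk₀_id_comp]
  rw [this, h ((Ext.mk₀ b).comp x (zero_add i)), Ext.comp_zero]

lemma EV_retract_right {L Y Y' : ModuleCat.{u} R} {i : ℕ} (a : Y ⟶ Y') (b : Y' ⟶ Y)
    (hab : a ≫ b = 𝟙 Y) (h : EV L Y' i) : EV L Y i := by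
  intro x
  have : x = (x.comp (Ext.mk₀ a) (add_zero i)).comp (Ext.mk₀ b) (add_zero i) := by
    rw [Ext.comp_assoc (a₁₂ := i) (a₂₃ := 0) _ _ _ (add_zero i) (zero_add 0) (by omega),
      Ext.mk₀_comp_mk₀, hab, Ext.comp_mk₀_id]
  rw [this, h (x.comp (Ext.mk₀ a) (add_zero i)), Ext.zero_comp]

lemma EV_equiv {L L' : Type u} [AddCommGroup L] [Module R L] [AddCommGroup L'] [Module R L']
    (e : L ≃ₗ[R] L') {Y : ModuleCat.{u} R} {i : ℕ} (h : EV (ModuleCat.of R L') Y i) :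
    EV (ModuleCat.of R L) Y i :=
  EV_retract (ModuleCat.ofHom e.toLinearMap) (ModuleCat.ofHom e.symm.toLinearMap)
    (ModuleCat.hom_ext (LinearMap.ext fun x => e.symm_apply_apply x)) h

lemma EV_mid {S : ShortComplex (ModuleCat.{u} R)} (hS : S.ShortExact) {Y : ModuleCat.{u} R} {i : ℕ}
    (h1 : EV S.X₁ Y i) (h3 : EV S.X₃ Y i) : EV S.X₂ Y i := by
  intro x
  obtain ⟨y, rfl⟩ := Ext.contravariant_sequence_exact₂ hS Y x (h1 _)
  rw [h3 y, Ext.comp_zero]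

lemma EV_filt [IsNoetherianRing R] (Y : ModuleCat.{u} R) (i : ℕ) (L : Type u) [AddCommGroup L]
    [Module R L] [hL : Module.Finite R L]
    (h : ∀ p : PrimeSpectrum R, p ∈ Module.support R L → EV (ModuleCat.of R (R ⧸ p.asIdeal)) Y i) :
    EV (ModuleCat.of R L) Y i := by
  revert h
  refine IsNoetherianRing.induction_on_isQuotientEquivQuotientPrime R hL
    (motive := fun N _ _ _ => (∀ p : PrimeSpectrum R, p ∈ Module.support R N →
      EV (ModuleCat.of R (R ⧸ p.asIdeal)) Y i) → EV (ModuleCat.of R N) Y i) ?_ ?_ ?_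
  · intro N _ _ _ _ _ x
    rw [← Ext.mk₀_id_comp x, (ModuleCat.hom_ext (LinearMap.ext fun x => Subsingleton.elim _ _) :
      𝟙 (ModuleCat.of R N) = 0), Ext.mk₀_zero, Ext.zero_comp]
  · intro N _ _ _ p e h
    refine EV_equiv e (h p ?_)
    rw [e.support_eq, Module.mem_support_iff_of_finite, Ideal.annihilator_quotient]
  · intro N₁ _ _ _ N₂ _ _ _ N₃ _ _ _ f g hf hg hfg h1 h3 h
    refine EV_mid (surS_exact f g hfg.linearMap_comp_eq_zero hf hg (fun x hx => (hfg x).1 hx))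
      (h1 fun p hp => h p (Module.support_subset_of_injective f hf hp))
      (h3 fun p hp => h p (Module.support_subset_of_surjective g hg hp))

/-- multiplication sequence -/
abbrev mulS (K : Ideal R) (f : R) : ShortComplex (ModuleCat.{u} R) :=
  surS (LinearMap.lsmul R (R ⧸ K) f) (Submodule.factor (le_sup_left : K ≤ K ⊔ Ideal.span {f})) (by
    ext
    change Submodule.Quotient.mk _ = _
    change Submodule.Quotient.mk (f * 1) = (0 : R ⧸ (K ⊔ Ideal.span {f}))
    rw [Submodule.Quotient.mk_eq_zero, mul_one]
    exact Ideal.mem_sup_right (Ideal.mem_span_singleton_self f))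

lemma mulS_exact (K : Ideal R) (f : R) (h : ∀ a, f * a ∈ K → a ∈ K) : (mulS K f).ShortExact := by
  refine surS_exact _ _ _ ?_ (Submodule.factor_surjective _) ?_
  · rw [← LinearMap.ker_eq_bot, LinearMap.ker_eq_bot']
    intro x hx
    obtain ⟨x, rfl⟩ := Submodule.Quotient.mk_surjective _ x
    have h1 : Submodule.Quotient.mk (f * x) = (0 : R ⧸ K) := hx
    rw [Submodule.Quotient.mk_eq_zero] at h1 ⊢
    exact h x h1
  · intro x hx
    obtain ⟨x, rfl⟩ := Submodule.Quotient.mk_surjective _ x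
    have h1 : Submodule.Quotient.mk x = (0 : R ⧸ (K ⊔ Ideal.span {f})) := hx
    rw [Submodule.Quotient.mk_eq_zero] at h1
    obtain ⟨a, ha, b, hb, rfl⟩ := Submodule.mem_sup.1 h1
    obtain ⟨c, rfl⟩ := Ideal.mem_span_singleton'.1 hb
    refine ⟨Submodule.Quotient.mk c, ?_⟩
    change (Submodule.Quotient.mk (f * c) : R ⧸ K) = _
    rw [Submodule.Quotient.eq]
    have : f * c - (a + c * f) = - a := by ring
    rw [this]
    exact neg_mem ha

lemma mulS_f (K : Ideal R) (f : R) : (mulS K f).f = f • 𝟙 (ModuleCat.of R (R ⧸ K)) :=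
  ModuleCat.hom_ext (LinearMap.ext fun _ => rfl)

lemma smul_eq_left {L Y : ModuleCat.{u} R} {i : ℕ} (r : R) (x : Abelian.Ext.{u} L Y i) :
    r • x = (Ext.mk₀ (r • 𝟙 L)).comp x (zero_add i) := by
  rw [Ext.mk₀_smul, Ext.smul_comp, Ext.mk₀_id_comp]

lemma smul_kill {L Y : ModuleCat.{u} R} {i : ℕ} (r : R) (hr : ∀ x : L, r • x = 0)
    (x : Abelian.Ext.{u} L Y i) : r • x = 0 := by
  have h : r • 𝟙 L = 0 := ModuleCat.hom_ext (LinearMap.ext fun x => hr x)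
  rw [smul_eq_left, h, Ext.mk₀_zero, Ext.zero_comp]

/-- quotient by zero -/
abbrev qbot (R : Type u) [CommRing R] : ModuleCat.of R (R ⧸ (⊥ : Ideal R)) ⟶ ModuleCat.of R R :=
  ModuleCat.ofHom ((⊥ : Submodule R R).quotEquivOfEqBot rfl).toLinearMap

/-- quotient by zero -/
abbrev qbot' (R : Type u) [CommRing R] : ModuleCat.of R R ⟶ ModuleCat.of R (R ⧸ (⊥ : Ideal R)) :=
  ModuleCat.ofHom ((⊥ : Submodule R R).quotEquivOfEqBot rfl).symm.toLinearMap

lemma qbot_comp : qbot R ≫ qbot' R = 𝟙 _ :=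
  ModuleCat.hom_ext (LinearMap.ext fun x => LinearEquiv.symm_apply_apply _ x)

lemma qbot'_comp : qbot' R ≫ qbot R = 𝟙 _ :=
  ModuleCat.hom_ext (LinearMap.ext fun x => LinearEquiv.apply_symm_apply
    ((⊥ : Submodule R R).quotEquivOfEqBot rfl) x)

variable [IsLocalRing R]

lemma RC_depth {i : ℕ} {K : Ideal R} (h : RC i K) : ∀ (N : ModuleCat.{u} R) (m : ℕ)
    (_ : ∀ r ∈ K, ∀ x : N, r • x = 0)
    (_ : ∀ j < m, EV N (ModuleCat.of R (R ⧸ K)) j) (j : ℕ), j < m + i →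
    EV N (ModuleCat.of R R) j := by
  induction h with
  | zero =>
    intro N m _ h j hj
    exact EV_retract_right (qbot' R) (qbot R) qbot'_comp (h j hj)
  | succ i K f hK hf hr ih =>
    intro N m hN h j hj
    refine ih N (m + 1) (fun r hr => hN r (Ideal.mem_sup_left hr)) ?_ j (by omega)
    intro j hj x
    have hx : x.comp (Ext.mk₀ (mulS K f).f) (add_zero j) = 0 := by
      have h1 := smul_kill f (hN f (Ideal.mem_sup_right (Ideal.mem_span_singleton_self f))) x
      rw [Ext.smul_eq_comp_mk₀] at h1
      rw [mulS_f]
      exact h1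
    have hS := mulS_exact K f hr
    cases j with
    | zero =>
      obtain ⟨a, rfl⟩ := (Ext.mk₀_bijective _ _).2 x
      rw [Ext.mk₀_comp_mk₀] at hx
      have h2 : a ≫ (mulS K f).f = 0 := (Ext.mk₀_bijective _ _).1 (hx.trans (Ext.mk₀_zero _ _).symm)
      have := hS.mono_f
      have h3 : a = 0 := (cancel_mono (mulS K f).f).1 (h2.trans zero_comp.symm)
      rw [h3, Ext.mk₀_zero]
    | succ j =>
      obtain ⟨y, rfl⟩ := Ext.covariant_sequence_exact₁ N hS x hx rfl
      rw [h j (by omega) y, Ext.zero_comp]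

lemma RC_grade {i : ℕ} {K : Ideal R} (h : RC i K) (N : ModuleCat.{u} R)
    (hN : ∀ r ∈ K, ∀ x : N, r • x = 0) (j : ℕ) (hj : j < i) : EV N (ModuleCat.of R R) j :=
  RC_depth h N 0 hN (fun j hj => by omega) j (by omega)

lemma RC_up {i : ℕ} {K : Ideal R} (h : RC i K) (L : ModuleCat.{u} R) (s : ℕ)
    (hs : ∀ q < s, EV L (ModuleCat.of R R) q) (q : ℕ) (hq : q + i < s) :
    EV L (ModuleCat.of R (R ⧸ K)) q := by
  induction h generalizing q with
  | zero => exact EV_retract_right (qbot R) (qbot' R) qbot_comp (hs q hq)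
  | succ i K f hK hf hr ih =>
    intro x
    obtain ⟨y, rfl⟩ := Ext.covariant_sequence_exact₃ L (mulS_exact K f hr) x rfl
      (ih (q + 1) (by omega) _)
    rw [ih q (by omega) y, Ext.zero_comp]

lemma RC_kappa {i : ℕ} {K : Ideal R} (h : RC i K) :
    ∃ κ : Abelian.Ext.{u} (ModuleCat.of R (R ⧸ K)) (ModuleCat.of R R) i,
      ∀ (L : ModuleCat.{u} R) (j s : ℕ) (hs : j + i = s)
        (_ : ∀ q < s, EV L (ModuleCat.of R R) q)
        (x : Abelian.Ext.{u} L (ModuleCat.of R (R ⧸ K)) j), x.comp κ hs = 0 → x = 0 := by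
  induction h with
  | zero =>
    refine ⟨Ext.mk₀ (qbot R), ?_⟩
    intro L j s hs _ x hx
    obtain rfl : j = s := hs
    have : x = (x.comp (Ext.mk₀ (qbot R)) (add_zero j)).comp (Ext.mk₀ (qbot' R)) (add_zero j) := by
      rw [Ext.comp_assoc (a₁₂ := j) (a₂₃ := 0) _ _ _ (add_zero j) (zero_add 0) (by omega),
        Ext.mk₀_comp_mk₀, qbot_comp, Ext.comp_mk₀_id]
    rw [this, hx, Ext.zero_comp]
  | succ i K f hK hf hr ih =>
    obtain ⟨κ, hκ⟩ := ih
    refine ⟨(mulS_exact K f hr).extClass.comp κ (add_comm 1 i), ?_⟩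
    intro L j s hs hv x hx
    rw [← Ext.comp_assoc (a₁₂ := j + 1) (a₂₃ := i + 1) _ _ _ rfl (by omega) (by omega)] at hx
    have h1 := hκ L (j + 1) s (by omega) hv _ hx
    obtain ⟨y, rfl⟩ := Ext.covariant_sequence_exact₃ L (mulS_exact K f hr) x rfl h1
    rw [RC_up hK L s hv j (by omega) y, Ext.zero_comp]

lemma RC_top {i : ℕ} {K : Ideal R} (h : RC i K) :
    (∀ j, i < j → EV (ModuleCat.of R (R ⧸ K)) (ModuleCat.of R R) j) ∧
    ∃ g : R →ₗ[R] Abelian.Ext.{u} (ModuleCat.of R (R ⧸ K)) (ModuleCat.of R R) i,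
      Function.Surjective g := by
  induction h with
  | zero =>
    constructor
    · intro j hj
      refine EV_retract (qbot R) (qbot' R) qbot_comp ?_
      obtain ⟨j, rfl⟩ : ∃ k, j = k + 1 := ⟨j - 1, by omega⟩
      intro x
      have : Projective (ModuleCat.of R R) := ModuleCat.projective_of_free (Module.Basis.singleton Unit R)
      exact Ext.eq_zero_of_projective x
    · refine ⟨(LinearMap.toSpanSingleton R _ (Ext.mk₀ (qbot R))), ?_⟩
      intro x
      obtain ⟨a, rfl⟩ := (Ext.mk₀_bijective _ _).2 x
      refine ⟨a.hom (Submodule.Quotient.mk 1), ?_⟩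
      rw [LinearMap.toSpanSingleton_apply, ← Ext.mk₀_smul]
      congr 1
      refine cyc_ext _ _ _ ?_
      change a.hom (Submodule.Quotient.mk 1) * (1 : R) = _
      rw [mul_one]
  | succ i K f hK hf hr ih =>
    obtain ⟨ih1, g, hg⟩ := ih
    have hS := mulS_exact K f hr
    constructor
    · intro j hj
      obtain ⟨j, rfl⟩ : ∃ k, j = 1 + k := ⟨j - 1, by omega⟩
      intro x
      obtain ⟨y, rfl⟩ := Ext.contravariant_sequence_exact₃ hS _ x (ih1 _ (by omega) _) rfl
      rw [ih1 j (by omega) y, Ext.comp_zero]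
    · refine ⟨(Ext.precompOfLinear hS.extClass R _ (add_comm 1 i)) ∘ₗ g, ?_⟩
      intro x
      obtain ⟨y, rfl⟩ := Ext.contravariant_sequence_exact₃ hS _ x (ih1 _ (by omega) _) (add_comm 1 i)
      obtain ⟨r, rfl⟩ := hg y
      exact ⟨r, rfl⟩

lemma RC_eln_le {n : ℕ} (h : RC n (maximalIdeal R)) :
    eln (ModuleCat.of R (R ⧸ maximalIdeal R)) (ModuleCat.of R R) n ≤ 1 := by
  obtain ⟨g, hg⟩ := (RC_top h).2
  have h1 : ∀ x ∈ maximalIdeal R, g x = 0 := by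
    intro x hx
    have : g x = x • g 1 := by rw [← map_smul, smul_eq_mul, mul_one]
    rw [this]
    refine smul_kill x ?_ _
    intro y
    obtain ⟨y, rfl⟩ := Submodule.Quotient.mk_surjective _ y
    change Submodule.Quotient.mk (x * y) = (0 : R ⧸ maximalIdeal R)
    rw [Submodule.Quotient.mk_eq_zero]
    exact Ideal.mul_mem_right _ _ hx
  let g' : (R ⧸ maximalIdeal R) →ₗ[R] _ := (maximalIdeal R).liftQ g h1
  have hg' : Function.Surjective g' := by
    intro y
    obtain ⟨r, rfl⟩ := hg y
    exact ⟨Submodule.Quotient.mk r, rfl⟩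
  refine (Module.length_le_of_surjective g' hg').trans ?_
  have : IsSimpleModule R (R ⧸ maximalIdeal R) :=
    isSimpleModule_iff_isCoatom.2 (Ideal.IsMaximal.out)
  rw [Module.length_eq_one]

end EVsec

section Nonvan
open CategoryTheory.Abelian CategoryTheory.Limits

variable {R : Type u} [CommRing R]

lemma quot_dim_succ (K : Ideal R) (f : R) (h : ∀ a, f * a ∈ K → a ∈ K) :
    ringKrullDim (R ⧸ (K ⊔ Ideal.span {f})) + 1 ≤ ringKrullDim (R ⧸ K) := by
  have h1 : Ideal.Quotient.mk K f ∈ nonZeroDivisors (R ⧸ K) := by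
    rw [mem_nonZeroDivisors_iff_right]
    intro x hx
    obtain ⟨x, rfl⟩ := Ideal.Quotient.mk_surjective x
    rw [← map_mul, Ideal.Quotient.eq_zero_iff_mem, mul_comm] at hx
    exact Ideal.Quotient.eq_zero_iff_mem.2 (h x hx)
  have h2 := ringKrullDim_quotient_succ_le_of_nonZeroDivisor h1
  have h3 := DoubleQuot.quotQuotEquivQuotSup K (Ideal.span {f})
  rw [Ideal.map_span, Set.image_singleton] at h3
  rwa [← ringKrullDim_eq_of_ringEquiv h3]

lemma quot_dim_anti {K K' : Ideal R} (h : K ≤ K') : ringKrullDim (R ⧸ K') ≤ ringKrullDim (R ⧸ K) :=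
  ringKrullDim_le_of_surjective (Ideal.Quotient.factor h) (Ideal.Quotient.factor_surjective h)

lemma ass_of_zd [IsNoetherianRing R] (K P : Ideal R) (h : ∀ f ∈ P, ¬ (∀ a, f * a ∈ K → a ∈ K)) :
    ∃ Q : Ideal R, Q.IsPrime ∧ P ≤ Q ∧ ∃ b : ModuleCat.of R (R ⧸ Q) ⟶ ModuleCat.of R (R ⧸ K),
      b ≠ 0 := by
  have h1 : (P : Set R) ⊆ ⋃ p ∈ associatedPrimes R (R ⧸ K), (p : Set R) := by
    rw [biUnion_associatedPrimes_eq_compl_regular]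
    intro f hf hr
    refine h f hf fun a ha => ?_
    have h2 : f • (Submodule.Quotient.mk a : R ⧸ K) = f • (0 : R ⧸ K) := by
      rw [smul_zero, ← Submodule.Quotient.mk_smul, Submodule.Quotient.mk_eq_zero]
      exact ha
    exact (Submodule.Quotient.mk_eq_zero _).1 (hr h2)
  obtain ⟨Q, hQ, hPQ⟩ := (Ideal.subset_union_prime_finite (associatedPrimes.finite R (R ⧸ K))
    (f := fun p => p) ⊥ ⊥ (fun i hi _ _ => IsAssociatedPrime.isPrime hi)).1 h1
  rw [AssociatedPrimes.mem_iff, isAssociatedPrime_iff] at hQ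
  obtain ⟨hQ, x, hx⟩ := hQ
  have hk : ∀ a ∈ Q, a • x = 0 := by
    intro a ha
    rw [hx, Submodule.mem_colon_singleton] at ha
    simpa using ha
  refine ⟨Q, hQ, hPQ, cyc (Z := ModuleCat.of R (R ⧸ K)) Q x hk, ?_⟩
  intro hc
  have h2 := cyc_one (Z := ModuleCat.of R (R ⧸ K)) Q x hk
  rw [hc] at h2
  have h3 : x = 0 := h2.symm
  apply hQ.ne_top
  rw [hx, h3, Ideal.eq_top_iff_one, Submodule.mem_colon_singleton]
  simp

variable [IsLocalRing R]

lemma dim_zero_max (p : Ideal R) [p.IsPrime] (h : ringKrullDim (R ⧸ p) ≤ 0) :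
    p = maximalIdeal R := by
  by_contra hne
  have hle : p ≤ maximalIdeal R := le_maximalIdeal (Ideal.IsPrime.ne_top ‹_›)
  obtain ⟨x, hx, hxp⟩ : ∃ x ∈ maximalIdeal R, x ∉ p := by
    by_contra! hc
    exact hne (le_antisymm hle hc)
  have h1 := quot_dim_succ p x (fun a ha => (Ideal.IsPrime.mem_or_mem ‹_› ha).resolve_left hxp)
  have : Nontrivial (R ⧸ (p ⊔ Ideal.span {x})) := by
    apply Ideal.Quotient.nontrivial_iff.2
    intro hc
    have : p ⊔ Ideal.span {x} ≤ maximalIdeal R :=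
      sup_le hle ((Ideal.span_singleton_le_iff_mem _).2 hx)
    rw [hc] at this
    exact (maximalIdeal.isMaximal R).ne_top (top_le_iff.1 this)
  have h2 : (0 : WithBot ℕ∞) ≤ ringKrullDim (R ⧸ (p ⊔ Ideal.span {x})) :=
    ringKrullDim_nonneg_of_nontrivial
  have h3 : (0 : WithBot ℕ∞) + 1 ≤ 0 := (add_le_add_left h2 1).trans (h1.trans h)
  exact absurd h3 (by decide)

lemma RC_dim {i : ℕ} {K : Ideal R} (h : RC i K) :
    ringKrullDim (R ⧸ K) + (i : ℕ) ≤ ringKrullDim R := by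
  induction h with
  | zero =>
    rw [Nat.cast_zero, add_zero]
    exact ringKrullDim_quotient_le _
  | succ i K f hK hf hr ih =>
    refine le_trans ?_ ih
    rw [Nat.cast_succ, add_comm (i : WithBot ℕ∞) 1, ← add_assoc]
    exact add_le_add_left (quot_dim_succ K f hr) _

lemma RC_le {i : ℕ} {K : Ideal R} (h : RC i K) : K ≤ maximalIdeal R := by
  induction h with
  | zero => exact bot_le
  | succ i K f hK hf hr ih => exact sup_le ih ((Ideal.span_singleton_le_iff_mem _).2 hf)

lemma quot_kill (K : Ideal R) (r : R) (hr : r ∈ K) (x : R ⧸ K) : r • x = 0 := by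
  obtain ⟨y, rfl⟩ := Submodule.Quotient.mk_surjective _ x
  change Submodule.Quotient.mk (r * y) = (0 : R ⧸ K)
  rw [Submodule.Quotient.mk_eq_zero]
  exact Ideal.mul_mem_right _ _ hr

variable [IsNoetherianRing R]

lemma isch {n : ℕ} (hn : RC n (maximalIdeal R)) (r : ℕ) : ∀ (p : Ideal R), p.IsPrime →
    ringKrullDim (R ⧸ p) ≤ (r : ℕ) → ∀ q, q + r < n →
    EV (ModuleCat.of R (R ⧸ p)) (ModuleCat.of R R) q := by
  induction r with
  | zero =>
    intro p hp hr q hq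
    obtain rfl := dim_zero_max p (by simpa using hr)
    exact RC_grade hn _ (fun r hr x => quot_kill _ r hr x) q (by omega)
  | succ r ih =>
    intro p hp hr q hq
    by_cases hpm : p = maximalIdeal R
    · subst hpm
      exact RC_grade hn _ (fun r hr x => quot_kill _ r hr x) q (by omega)
    obtain ⟨x, hx, hxp⟩ : ∃ x ∈ maximalIdeal R, x ∉ p := by
      by_contra! hc
      exact hpm (le_antisymm (le_maximalIdeal hp.ne_top) hc)
    have hreg : ∀ a, x * a ∈ p → a ∈ p := fun a ha => (hp.mem_or_mem ha).resolve_left hxp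
    have h1 := quot_dim_succ p x hreg
    have hS := mulS_exact p x hreg
    have h2 : EV (ModuleCat.of R (R ⧸ (p ⊔ Ideal.span {x}))) (ModuleCat.of R R) (1 + q) := by
      refine EV_filt _ _ _ fun Q hQ => ih Q.asIdeal Q.isPrime ?_ _ (by omega)
      rw [Module.mem_support_iff_of_finite, Ideal.annihilator_quotient] at hQ
      have h3 := (add_le_add_left (quot_dim_anti hQ) 1).trans (h1.trans hr)
      rw [Nat.cast_succ] at h3
      exact (ENat.WithBot.add_le_add_natCast_right_iff (c := 1)).mp (by exact_mod_cast h3)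
    have h4 : (⊤ : Submodule R (Abelian.Ext.{u} (ModuleCat.of R (R ⧸ p)) (ModuleCat.of R R) q)) = ⊥ := by
      refine Submodule.eq_bot_of_le_smul_of_le_jacobson_bot (maximalIdeal R) _ Module.Finite.fg_top ?_
        (IsLocalRing.maximalIdeal_le_jacobson _)
      intro y _
      obtain ⟨z, hz⟩ := Ext.contravariant_sequence_exact₁ hS (ModuleCat.of R R) y rfl (h2 _)
      rw [mulS_f] at hz
      have hz' : x • z = y := (smul_eq_left x z).trans hz
      rw [← hz']
      exact Submodule.smul_mem_smul hx Submodule.mem_top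
    intro y
    have : y ∈ (⊤ : Submodule R (Abelian.Ext.{u} (ModuleCat.of R (R ⧸ p)) (ModuleCat.of R R) q)) :=
      Submodule.mem_top
    rw [h4] at this
    simpa using this

lemma exists_max_RC (P : Ideal R) (hP : P.IsPrime) (n d : ℕ)
    (hn : ringKrullDim R = (n : ℕ)) (hd : ringKrullDim (R ⧸ P) = (d : ℕ)) :
    ∃ i K, i + d ≤ n ∧ RC i K ∧ K ≤ P ∧ ∀ f ∈ P, ¬ (∀ a, f * a ∈ K → a ∈ K) := by
  have hb : ∀ i K, RC i K → K ≤ P → i + d ≤ n := by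
    intro i K hK hKP
    have h1 := RC_dim hK
    rw [hn] at h1
    have h2 := (add_le_add_left (quot_dim_anti hKP) (i : WithBot ℕ∞)).trans h1
    rw [hd] at h2
    have : d + i ≤ n := by exact_mod_cast h2
    omega
  by_contra! hc
  have : ∀ i, ∃ K, RC i K ∧ K ≤ P := by
    intro i
    induction i with
    | zero => exact ⟨⊥, RC.zero, bot_le⟩
    | succ i ih =>
      obtain ⟨K, hK, hKP⟩ := ih
      obtain ⟨f, hf, hr⟩ := hc i K (hb i K hK hKP) hK hKP
      exact ⟨_, RC.succ i K f hK (le_maximalIdeal hP.ne_top hf) hr,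
        sup_le hKP ((Ideal.span_singleton_le_iff_mem _).2 hf)⟩
  obtain ⟨K, hK, hKP⟩ := this (n + 1)
  have := hb _ _ hK hKP
  omega

lemma nv_start (J P : Ideal R) (hJP : J ≤ P) {i : ℕ} {K : Ideal R} (hK : RC i K) (hKP : K ≤ P)
    (hz : ∀ f ∈ P, ¬ (∀ a, f * a ∈ K → a ∈ K)) :
    ∃ α : Abelian.Ext.{u} (ModuleCat.of R (R ⧸ K)) (GZ (ModuleCat.of R R) J i) 0,
      α.comp (gze (ModuleCat.of R R) J i) (zero_add i) ≠ 0 := by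
  obtain ⟨Q, hQ, hPQ, b, hb⟩ := ass_of_zd K P hz
  obtain ⟨κ, hκ⟩ := RC_kappa hK
  let π : ModuleCat.of R (R ⧸ K) ⟶ ModuleCat.of R (R ⧸ Q) :=
    ModuleCat.ofHom (Submodule.factor (hKP.trans hPQ))
  have hπ : Function.Surjective π.hom := Submodule.factor_surjective (hKP.trans hPQ)
  obtain ⟨y, hy⟩ := cze_surj _ (ModuleCat.of R R) i 0 i (zero_add i)
    ((Ext.mk₀ b).comp κ (zero_add i))
  obtain ⟨c, rfl⟩ := (Ext.mk₀_bijective _ _).2 y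
  have hc : ∀ x, c.hom x ∈ Gam J (cz (ModuleCat.of R R) i) := by
    intro x
    apply Gam_map c.hom
    rw [mem_Gam]
    refine le_trans ?_ Ideal.le_radical
    intro a ha
    rw [Ideal.mem_torsionOf_iff]
    exact quot_kill Q a (hPQ (hJP ha)) x
  let c' : ModuleCat.of R (R ⧸ Q) ⟶ GZ (ModuleCat.of R R) J i :=
    ModuleCat.ofHom (c.hom.codRestrict _ hc)
  have hc' : c' ≫ gin (ModuleCat.of R R) J i = c := rfl
  refine ⟨Ext.mk₀ (π ≫ c'), ?_⟩
  intro h0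
  have h1 : (Ext.mk₀ (π ≫ b)).comp κ (zero_add i) = 0 := by
    rw [← h0, ← Ext.mk₀_comp_mk₀, Ext.comp_assoc (a₁₂ := 0) (a₂₃ := i) _ _ _ (by omega) (by omega)
      (by omega), ← hy, gze, ← Ext.comp_assoc (a₁₂ := 0) (a₂₃ := i) (Ext.mk₀ (π ≫ c')) _ _ (by omega)
      (by omega) (by omega), Ext.mk₀_comp_mk₀, Category.assoc, hc',
      ← Ext.comp_assoc (a₁₂ := 0) (a₂₃ := i) _ _ _ (by omega) (by omega) (by omega),
      Ext.mk₀_comp_mk₀]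
  have h2 := hκ _ 0 i (zero_add i) (RC_grade hK _ (fun r hr x => quot_kill _ r hr x)) _ h1
  have h3 : π ≫ b = 0 := (Ext.mk₀_bijective _ _).1 (h2.trans (Ext.mk₀_zero _ _).symm)
  have : Epi π := (ModuleCat.epi_iff_surjective _).2 hπ
  exact hb ((cancel_epi π).1 (h3.trans comp_zero.symm))

lemma nv_step {n : ℕ} (hn : RC n (maximalIdeal R)) (J : Ideal R) (i j s : ℕ) (hs : j + i = s)
    (hsn : s < n) {K : Ideal R} (hK : RC s K)
    (α : Abelian.Ext.{u} (ModuleCat.of R (R ⧸ K)) (GZ (ModuleCat.of R R) J i) j)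
    (hα : α.comp (gze (ModuleCat.of R R) J i) hs ≠ 0) :
    ∃ K' : Ideal R, RC (s + 1) K' ∧
      ∃ α' : Abelian.Ext.{u} (ModuleCat.of R (R ⧸ K')) (GZ (ModuleCat.of R R) J i) (j + 1),
        α'.comp (gze (ModuleCat.of R R) J i) (by omega : (j + 1) + i = s + 1) ≠ 0 := by
  obtain ⟨y, hy, hyr⟩ : ∃ y ∈ maximalIdeal R, ∀ a, y * a ∈ K → a ∈ K := by
    by_contra! hc
    obtain ⟨Q, hQ, hPQ, b, hb⟩ := ass_of_zd K (maximalIdeal R) (fun f hf h => by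
      obtain ⟨a, ha, ha'⟩ := hc f hf
      exact ha' (h a ha))
    obtain rfl : Q = maximalIdeal R := le_antisymm (le_maximalIdeal hQ.ne_top) hPQ
    have h1 := RC_up hK (ModuleCat.of R (R ⧸ maximalIdeal R)) n
      (fun q hq => RC_grade hn _ (fun r hr x => quot_kill _ r hr x) q hq) 0 (by omega) (Ext.mk₀ b)
    exact hb ((Ext.mk₀_bijective _ _).1 (h1.trans (Ext.mk₀_zero _ _).symm))
  obtain ⟨N, hN⟩ : ∃ N : ℕ, α.comp (gze (ModuleCat.of R R) J i) hs ∉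
      (maximalIdeal R ^ N • (⊤ : Submodule R
        (Abelian.Ext.{u} (ModuleCat.of R (R ⧸ K)) (ModuleCat.of R R) s))) := by
    by_contra! hc
    have h1 := (Submodule.mem_iInf _).2 hc
    rw [Ideal.iInf_pow_smul_eq_bot_of_isLocalRing _ (maximalIdeal.isMaximal R).ne_top] at h1
    exact hα (by simpa using h1)
  have hNm : y ^ (N + 1) ∈ maximalIdeal R := Ideal.pow_mem_of_mem _ hy _ (by omega)
  have hNr : ∀ M a, y ^ M * a ∈ K → a ∈ K := by
    intro M
    induction M with
    | zero => intro a ha; simpa using ha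
    | succ M ih =>
      intro a ha
      refine ih a (hyr _ ?_)
      have : y * (y ^ M * a) = y ^ (M + 1) * a := by ring
      rwa [this]
  have hS := mulS_exact K (y ^ (N + 1)) (hNr (N + 1))
  refine ⟨_, RC.succ s K _ hK hNm (hNr (N + 1)), hS.extClass.comp α (add_comm 1 j), ?_⟩
  intro h0
  rw [Ext.comp_assoc (a₁₂ := j + 1) (a₂₃ := s) _ _ _ (by omega) (by omega) (by omega)] at h0
  obtain ⟨z, hz⟩ := Ext.contravariant_sequence_exact₁ hS _ _ (by omega) h0
  rw [mulS_f] at hz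
  have hz' := (smul_eq_left (y ^ (N + 1)) z).trans hz
  apply hN
  rw [← hz']
  exact Submodule.smul_mem_smul (Ideal.pow_le_pow_right (by omega) (Ideal.pow_mem_pow hy (N + 1)))
    Submodule.mem_top

lemma nonvan {n : ℕ} (hn : RC n (maximalIdeal R)) (hdn : ringKrullDim R = (n : ℕ))
    (J P : Ideal R) (hP : P.IsPrime) (hJP : J ≤ P)
    (d t : ℕ) (hd : ringKrullDim (R ⧸ P) = (d : ℕ)) (ht : t + 2 ≤ d) :
    ¬ EV (ModuleCat.of R (R ⧸ maximalIdeal R)) (GZ (ModuleCat.of R R) J (n - t - 2)) (t + 2) := by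
  obtain ⟨i, K, hi, hK, hKP, hz⟩ := exists_max_RC P hP n d hdn hd
  have key : ∀ j s (hs : j + i = s), s ≤ n → ∃ K' : Ideal R, RC s K' ∧
      ∃ α' : Abelian.Ext.{u} (ModuleCat.of R (R ⧸ K')) (GZ (ModuleCat.of R R) J i) j,
        α'.comp (gze (ModuleCat.of R R) J i) hs ≠ 0 := by
    intro j
    induction j with
    | zero =>
      intro s hs _
      obtain rfl : i = s := by omega
      obtain ⟨α, hα⟩ := nv_start J P hJP hK hKP hz
      exact ⟨K, hK, α, hα⟩
    | succ j ih =>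
      intro s hs hj
      obtain ⟨s, rfl⟩ : ∃ s', s = s' + 1 := ⟨s - 1, by omega⟩
      obtain ⟨K', hK', α, hα⟩ := ih s (by omega) (by omega)
      exact nv_step hn J i j s (by omega) (by omega) hK' α hα
  obtain ⟨K', hK', α, hα⟩ := key (n - i) n (by omega) le_rfl
  obtain ⟨β, hβ⟩ := gze_up_iter (ModuleCat.of R R) J (n - i - t - 2) i (t + 2) (n - i) (n - t - 2) n
    (by omega) (by omega) (by omega) (by omega) α
  intro hEV
  have h1 : EV (ModuleCat.of R (R ⧸ K')) (GZ (ModuleCat.of R R) J (n - t - 2)) (t + 2) := by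
    refine EV_filt _ _ _ fun Q hQ => ?_
    rw [Module.mem_support_iff_of_finite, Ideal.annihilator_quotient] at hQ
    have h2 := RC_dim hK'
    rw [hdn] at h2
    have h3 : ringKrullDim (R ⧸ Q.asIdeal) ≤ 0 := by
      refine (quot_dim_anti hQ).trans ?_
      refine (ENat.WithBot.add_le_add_natCast_right_iff (c := n)).mp ?_
      rw [zero_add]
      exact h2
    have := Q.isPrime
    rw [dim_zero_max Q.asIdeal h3]
    exact hEV
  apply hα
  rw [hβ, h1 β, Ext.zero_comp]

end Nonvan

section MV
open CategoryTheory.Abelian CategoryTheory.Limits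

variable {R : Type u} [CommRing R] [IsLocalRing R] [IsNoetherianRing R]

/-- vanishing of Ext of torsion cyclic modules below degree `g` -/
def TV (K : Ideal R) (g : ℕ) : Prop :=
  ∀ a : Ideal R, K ≤ a.radical → ∀ q < g, EV (ModuleCat.of R (R ⧸ a)) (ModuleCat.of R R) q

lemma TV_of {n : ℕ} (hn : RC n (maximalIdeal R)) (K : Ideal R) (t : ℕ)
    (hK : ∀ Q : Ideal R, Q.IsPrime → K ≤ Q → ringKrullDim (R ⧸ Q) ≤ (t : ℕ)) : TV K (n - t) := by
  intro a ha q hq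
  refine EV_filt _ _ _ fun Q hQ => ?_
  rw [Module.mem_support_iff_of_finite, Ideal.annihilator_quotient] at hQ
  exact isch hn t Q.asIdeal Q.isPrime (hK _ Q.isPrime
    (ha.trans (Q.isPrime.radical_le_iff.2 hQ))) q (by omega)

variable {K : Ideal R} {g : ℕ}

lemma mv_surj (hK : TV K g) (q : ℕ) (hq : q + 1 < g) (z : cz (ModuleCat.of R R) (q + 1))
    (hz : z ∈ Gam K (cz (ModuleCat.of R R) (q + 1))) :
    ∃ e ∈ Gam K (ce (ModuleCat.of R R) q), (czp (ModuleCat.of R R) q).hom e = z := by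
  have h0 : ∀ a ∈ Ideal.torsionOf R (cz (ModuleCat.of R R) (q + 1)) z, a • z = 0 :=
    fun a ha => (Ideal.mem_torsionOf_iff _ _).1 ha
  obtain ⟨w, hw⟩ := cze_lift _ (ModuleCat.of R R) q (cyc _ z h0)
    (hK _ (mem_Gam.1 hz) (q + 1) hq _)
  refine ⟨w.hom (Submodule.Quotient.mk 1), ?_, ?_⟩
  · apply Gam_map w.hom
    rw [mem_Gam]
    refine (mem_Gam.1 hz).trans (Ideal.radical_mono ?_)
    intro a ha
    rw [Ideal.mem_torsionOf_iff]
    exact quot_kill _ a ha _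
  · exact (congrArg (fun f => f.hom (Submodule.Quotient.mk 1)) hw).trans (cyc_one _ z h0)

lemma mv_zero (hK : TV K g) (hg : 0 < g) (z : cz (ModuleCat.of R R) 0)
    (hz : z ∈ Gam K (cz (ModuleCat.of R R) 0)) : z = 0 := by
  have h0 : ∀ a ∈ Ideal.torsionOf R (cz (ModuleCat.of R R) 0) z, a • z = 0 :=
    fun a ha => (Ideal.mem_torsionOf_iff _ _).1 ha
  let c := cyc (Z := cz (ModuleCat.of R R) 0) _ z h0
  have h1 := hK _ (mem_Gam.1 hz) 0 hg (Ext.mk₀ (c ≫ czid _))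
  have h2 : c ≫ czid _ = 0 := (Ext.mk₀_bijective _ _).1 (h1.trans (Ext.mk₀_zero _ _).symm)
  have h3 := congrArg (fun f => f.hom (Submodule.Quotient.mk 1)) h2
  exact (cyc_one _ z h0).symm.trans h3

lemma mv_EV (hK : TV K g) (L : ModuleCat.{u} R) (q : ℕ) (hq : q < g) (i : ℕ) :
    EV L (GZ (ModuleCat.of R R) K q) (i + 1) := by
  induction q generalizing i with
  | zero =>
    intro x
    have h : 𝟙 (GZ (ModuleCat.of R R) K 0) = 0 :=
      ModuleCat.hom_ext (LinearMap.ext fun x => Subtype.ext (mv_zero hK hq x.1 x.2))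
    rw [← Ext.comp_mk₀_id x, h, Ext.mk₀_zero, Ext.comp_zero]
  | succ q ih =>
    intro x
    have hS : (surS (Gmap K (czi (ModuleCat.of R R) q).hom) (Gmap K (czp (ModuleCat.of R R) q).hom) (by
        ext x
        exact cz_comp (ModuleCat.of R R) q x.1)).ShortExact := by
      refine surS_exact _ _ _ ?_ ?_ ?_
      · intro x y h
        exact Subtype.ext (czi_injective _ q (congrArg Subtype.val h))
      · rintro ⟨z, hz⟩
        obtain ⟨e, he, hez⟩ := mv_surj hK q hq z hz
        exact ⟨⟨e, he⟩, Subtype.ext hez⟩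
      · rintro ⟨x, hx⟩ h
        have h' : (czp (ModuleCat.of R R) q).hom x = 0 := congrArg (fun z => z.1) h
        obtain ⟨y, rfl⟩ := cz_ex _ q x h'
        exact ⟨⟨y, Gam_of_map _ (czi_injective _ q) hx⟩, rfl⟩
    obtain ⟨y, rfl⟩ := Ext.covariant_sequence_exact₃ L hS x rfl (ih (by omega) (i + 1) _)
    have hy : y = 0 := Ext.eq_zero_of_injective (I := GE (ModuleCat.of R R) K q) y
    rw [hy, Ext.zero_comp]

lemma mv_len (J J' : Ideal R) (hK : TV (J ⊔ J') g) (m : ℕ) (hm : m + 1 < g) (L : ModuleCat.{u} R)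
    (i : ℕ) :
    eln L (GZ (ModuleCat.of R R) J m) (i + 1) + eln L (GZ (ModuleCat.of R R) J' m) (i + 1) ≤
      eln L (GZ (ModuleCat.of R R) (J ⊓ J') m) (i + 1) := by
  have hJ : Gam J (cz (ModuleCat.of R R) m) ≤ Gam (J ⊓ J') (cz (ModuleCat.of R R) m) :=
    Gam_anti (inf_le_left.trans Ideal.le_radical)
  have hJ' : Gam J' (cz (ModuleCat.of R R) m) ≤ Gam (J ⊓ J') (cz (ModuleCat.of R R) m) :=
    Gam_anti (inf_le_right.trans Ideal.le_radical)
  have hKJ : Gam (J ⊔ J') (cz (ModuleCat.of R R) m) ≤ Gam J (cz (ModuleCat.of R R) m) :=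
    Gam_anti (le_sup_left.trans Ideal.le_radical)
  have hKJ' : Gam (J ⊔ J') (cz (ModuleCat.of R R) m) ≤ Gam J' (cz (ModuleCat.of R R) m) :=
    Gam_anti (le_sup_right.trans Ideal.le_radical)
  let f := (Submodule.inclusion hKJ).prod (-(Submodule.inclusion hKJ'))
  let g' := (Submodule.inclusion hJ).coprod (Submodule.inclusion hJ')
  have hS : (surS f g' (by
      ext x
      change x.1 + -x.1 = 0
      exact add_neg_cancel _)).ShortExact := by
    refine surS_exact _ _ _ ?_ ?_ ?_
    · intro x y h
      exact Subtype.ext (congrArg (fun w => w.1.1) h)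
    · rintro ⟨z, hz⟩
      have hB : Module.Baer R (ce (ModuleCat.of R R) m) := by
        apply Module.Baer.of_injective
        rw [Module.injective_iff_injective_object]
        change Injective (ce (ModuleCat.of R R) m)
        infer_instance
      obtain ⟨a, ha, b, hb, hab⟩ := Gam_mv J J' hB ((czi (ModuleCat.of R R) m).hom z) (Gam_map _ hz)
      have hp : (czp (ModuleCat.of R R) m).hom a = - (czp (ModuleCat.of R R) m).hom b := by
        rw [eq_neg_iff_add_eq_zero, ← map_add, hab]
        exact cz_comp _ m z
      obtain ⟨e, he, hez⟩ := mv_surj hK m hm ((czp (ModuleCat.of R R) m).hom a) (by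
        rw [Gam_sup]
        refine ⟨Gam_map _ ha, ?_⟩
        rw [hp]
        exact neg_mem (Gam_map _ hb))
      rw [Gam_sup] at he
      obtain ⟨x, hx⟩ := cz_ex _ m (a - e) (by rw [map_sub, hez, sub_self])
      obtain ⟨y, hy⟩ := cz_ex _ m (b + e) (by rw [map_add, hez, hp, add_neg_cancel])
      refine ⟨(⟨x, Gam_of_map _ (czi_injective _ m) (by rw [hx]; exact sub_mem ha he.1)⟩,
        ⟨y, Gam_of_map _ (czi_injective _ m) (by rw [hy]; exact add_mem hb he.2)⟩), ?_⟩
      refine Subtype.ext (czi_injective _ m ?_)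
      change (czi (ModuleCat.of R R) m).hom (x + y) = (czi (ModuleCat.of R R) m).hom z
      rw [map_add, hx, hy, ← hab]
      abel
    · rintro ⟨⟨x, hx⟩, ⟨y, hy⟩⟩ h
      have h' : x + y = 0 := congrArg Subtype.val h
      have h2 : y = - x := (neg_eq_of_add_eq_zero_right h').symm
      subst h2
      refine ⟨⟨x, ?_⟩, rfl⟩
      rw [Gam_sup]
      exact ⟨hx, by simpa using neg_mem hy⟩
  rw [← Module.length_prod]
  let F := LinearMap.coprod
    (Ext.postcompOfLinear (Ext.mk₀ (ModuleCat.ofHom (Submodule.inclusion hJ))) R L (add_zero (i + 1)))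
    (Ext.postcompOfLinear (Ext.mk₀ (ModuleCat.ofHom (Submodule.inclusion hJ'))) R L (add_zero (i + 1)))
  refine Module.length_le_of_injective F ?_
  rw [← LinearMap.ker_eq_bot, LinearMap.ker_eq_bot']
  rintro ⟨x, y⟩ hxy
  have hxy' : x.comp (Ext.mk₀ (ModuleCat.ofHom (Submodule.inclusion hJ))) (add_zero (i + 1)) +
    y.comp (Ext.mk₀ (ModuleCat.ofHom (Submodule.inclusion hJ'))) (add_zero (i + 1)) = 0 := hxy
  let inl : GZ (ModuleCat.of R R) J m ⟶ ModuleCat.of R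
    (Gam J (cz (ModuleCat.of R R) m) × Gam J' (cz (ModuleCat.of R R) m)) :=
    ModuleCat.ofHom (LinearMap.inl R _ _)
  let inr : GZ (ModuleCat.of R R) J' m ⟶ ModuleCat.of R
    (Gam J (cz (ModuleCat.of R R) m) × Gam J' (cz (ModuleCat.of R R) m)) :=
    ModuleCat.ofHom (LinearMap.inr R _ _)
  let fst : ModuleCat.of R
    (Gam J (cz (ModuleCat.of R R) m) × Gam J' (cz (ModuleCat.of R R) m)) ⟶
      GZ (ModuleCat.of R R) J m := ModuleCat.ofHom (LinearMap.fst R _ _)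
  let snd : ModuleCat.of R
    (Gam J (cz (ModuleCat.of R R) m) × Gam J' (cz (ModuleCat.of R R) m)) ⟶
      GZ (ModuleCat.of R R) J' m := ModuleCat.ofHom (LinearMap.snd R _ _)
  have e1 : inl ≫ fst = 𝟙 _ := rfl
  have e2 : inl ≫ snd = 0 := rfl
  have e3 : inr ≫ fst = 0 := rfl
  have e4 : inr ≫ snd = 𝟙 _ := rfl
  have e5 : inl ≫ ModuleCat.ofHom g' = ModuleCat.ofHom (Submodule.inclusion hJ) := by
    rw [← ModuleCat.ofHom_comp, LinearMap.coprod_inl]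
  have e6 : inr ≫ ModuleCat.ofHom g' = ModuleCat.ofHom (Submodule.inclusion hJ') := by
    rw [← ModuleCat.ofHom_comp, LinearMap.coprod_inr]
  have hc : ∀ {A B C D : ModuleCat.{u} R} (w : Abelian.Ext.{u} A B (i + 1)) (p : B ⟶ C) (q : C ⟶ D),
      (w.comp (Ext.mk₀ p) (add_zero (i + 1))).comp (Ext.mk₀ q) (add_zero (i + 1)) =
        w.comp (Ext.mk₀ (p ≫ q)) (add_zero (i + 1)) := by
    intro A B C D w p q
    rw [Ext.comp_assoc (a₁₂ := i + 1) (a₂₃ := 0) _ _ _ (by omega) (by omega) (by omega),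
      Ext.mk₀_comp_mk₀]
  have h0 : x.comp (Ext.mk₀ inl) (add_zero (i + 1)) + y.comp (Ext.mk₀ inr) (add_zero (i + 1)) = 0 := by
    obtain ⟨v, hv⟩ := Ext.covariant_sequence_exact₂ L hS
      (x.comp (Ext.mk₀ inl) (add_zero (i + 1)) + y.comp (Ext.mk₀ inr) (add_zero (i + 1))) (by
        rw [Ext.add_comp, hc, hc]
        exact (by rw [e5, e6]; exact hxy' : x.comp (Ext.mk₀ (inl ≫ ModuleCat.ofHom g')) (add_zero (i + 1)) +
          y.comp (Ext.mk₀ (inr ≫ ModuleCat.ofHom g')) (add_zero (i + 1)) = 0))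
    rw [← hv]
    have hv0 : v = 0 := mv_EV hK L m (by omega) i v
    rw [hv0, Ext.zero_comp]
  have hx : x = 0 := by
    have := congrArg (fun w => w.comp (Ext.mk₀ fst) (add_zero (i + 1))) h0
    simpa only [Ext.add_comp, hc, e1, e3, Ext.comp_mk₀_id, Ext.mk₀_zero, Ext.comp_zero, add_zero,
      Ext.zero_comp] using this
  have hy : y = 0 := by
    have := congrArg (fun w => w.comp (Ext.mk₀ snd) (add_zero (i + 1))) h0
    simpa only [Ext.add_comp, hc, e2, e4, Ext.comp_mk₀_id, Ext.mk₀_zero, Ext.comp_zero, zero_add,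
      Ext.zero_comp] using this
  rw [hx, hy]
  rfl

end MV

section Final
open CategoryTheory.Abelian CategoryTheory.Limits

lemma comp_count {R : Type u} [CommRing R] [IsLocalRing R] [IsNoetherianRing R] {n : ℕ}
    (hn : RC n (maximalIdeal R)) (hdn : ringKrullDim R = (n : ℕ)) (d t : ℕ) (ht : t + 2 ≤ d)
    (htn : t + 2 ≤ n) {ι C : Type*} [Fintype ι] [DecidableEq C] (P : ι → Ideal R) (c : ι → C)
    (hc : Function.Surjective c) (hP : ∀ i, (P i).IsPrime)
    (hd : ∀ i, ringKrullDim (R ⧸ P i) = (d : ℕ))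
    (hsep : ∀ i j, c i ≠ c j → ∀ Q : Ideal R, Q.IsPrime → P i ≤ Q → P j ≤ Q →
      ringKrullDim (R ⧸ Q) ≤ (t : ℕ)) (T : Finset C) :
    (T.card : ℕ∞) ≤ eln (ModuleCat.of R (R ⧸ maximalIdeal R))
      (GZ (ModuleCat.of R R) ((Finset.univ.filter (fun i => c i ∈ T)).inf P) (n - t - 2)) (t + 2) := by
  classical
  induction T using Finset.induction_on with
  | empty => simp
  | insert a T ha ih =>
    have h1 : (Finset.univ.filter (fun i => c i ∈ insert a T)).inf P =
        (Finset.univ.filter (fun i => c i = a)).inf P ⊓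
          (Finset.univ.filter (fun i => c i ∈ T)).inf P := by
      rw [← Finset.inf_union]
      congr 1
      ext i
      simp
    rw [h1, Finset.card_insert_of_notMem ha]
    have hTV : TV ((Finset.univ.filter (fun i => c i = a)).inf P ⊔
          (Finset.univ.filter (fun i => c i ∈ T)).inf P) (n - t) := by
      refine TV_of hn _ t fun Q hQ hle => ?_
      obtain ⟨i, hi, hiQ⟩ := (Ideal.IsPrime.inf_le' hQ).1 (le_sup_left.trans hle)
      obtain ⟨j, hj, hjQ⟩ := (Ideal.IsPrime.inf_le' hQ).1 (le_sup_right.trans hle)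
      refine hsep i j ?_ Q hQ hiQ hjQ
      intro hij
      simp only [Finset.mem_filter, Finset.mem_univ, true_and] at hi hj
      rw [← hij, hi] at hj
      exact ha hj
    refine le_trans ?_ (mv_len _ _ hTV (n - t - 2) (by omega) _ (t + 1))
    push_cast
    rw [add_comm]
    refine add_le_add ?_ ih
    obtain ⟨i, hi⟩ := hc a
    have hnv := nonvan hn hdn ((Finset.univ.filter (fun i => c i = a)).inf P) (P i) (hP i)
      (Finset.inf_le (by simp [hi])) d t (hd i) ht
    rw [Order.one_le_iff_ne_zero]
    intro h0
    rw [Module.length_eq_zero_iff] at h0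
    exact hnv fun x => Subsingleton.elim _ _

lemma mk_eq_of_le {A : Type u} [CommRing A] (J : Ideal A)
    (x y : ((PrimeSpectrum.zeroLocus (J : Set A))ᶜ : Set (PrimeSpectrum A)))
    (h : x.1.asIdeal ≤ y.1.asIdeal) :
    (_root_.ConnectedComponents.mk x) = _root_.ConnectedComponents.mk y := by
  symm
  rw [_root_.ConnectedComponents.coe_eq_coe']
  have h1 : x ⤳ y := (subtype_specializes_iff x y).2 ((PrimeSpectrum.le_iff_specializes _ _).1 h)
  exact h1.mem_closed isClosed_connectedComponent mem_connectedComponent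

lemma main_bound (A : Type u) [CommRing A] [IsNoetherianRing A]
    (R : Type u) [CommRing R] [IsLocalRing R] [IsNoetherianRing R] (hreg : IsRegularLocal R)
    (n : ℕ) (hn : ringKrullDim R = (n : ℕ)) (I : Ideal R) (e : A ≃+* R ⧸ I)
    (d : ℕ) (hA : ∀ p ∈ minimalPrimes A, ringKrullDim (A ⧸ p) = (d : ℕ)) (hdn : d ≤ n)
    (t : ℕ) (htd : t + 2 ≤ d) (hI : I ≤ maximalIdeal R) (J : Ideal A)
    (hJ : ringKrullDim (A ⧸ J) ≤ ((t : ℕ) : WithBot ℕ∞)) :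
    ((Nat.card (_root_.ConnectedComponents
          ((PrimeSpectrum.zeroLocus (J : Set A))ᶜ : Set (PrimeSpectrum A))) : ℕ) : WithBot ℕ∞) ≤
        1 + ∑ i ∈ Finset.range (t + 1), lyubeznikNumber R I n i (i + 1) := by
  classical
  obtain ⟨s, hs, hcard⟩ := hreg
  have hsn : s.card = n := by
    rw [hn] at hcard
    exact_mod_cast hcard.symm
  have hRC := (reg_main n R s hsn.le hs hn.ge).2
  let ψ : R →+* A := e.symm.toRingHom.comp (Ideal.Quotient.mk I)
  have hψ : Function.Surjective ψ := e.symm.surjective.comp Ideal.Quotient.mk_surjective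
  have hψ0 : ∀ r, ψ r = 0 ↔ r ∈ I := by
    intro r
    change e.symm (Ideal.Quotient.mk I r) = 0 ↔ _
    rw [map_eq_zero_iff _ e.symm.injective, Ideal.Quotient.eq_zero_iff_mem]
  let X : Set (PrimeSpectrum A) := (PrimeSpectrum.zeroLocus (J : Set A))ᶜ
  have hXmem : ∀ p : PrimeSpectrum A, p ∈ X ↔ ¬ J ≤ p.asIdeal := fun p => Iff.rfl
  have hfin := minimalPrimes.finite_of_isNoetherianRing A
  let ι := minimalPrimes A
  have : Finite ι := hfin
  have : Fintype ι := Fintype.ofFinite _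
  have hprime : ∀ i : ι, i.1.IsPrime := fun i => i.2.1.1
  have hmem : ∀ i : ι, (⟨i.1, hprime i⟩ : PrimeSpectrum A) ∈ X := by
    intro i
    rw [hXmem]
    intro hle
    have h1 := (quot_dim_anti hle).trans hJ
    change ringKrullDim (A ⧸ i.1) ≤ _ at h1
    rw [hA i.1 i.2] at h1
    have : d ≤ t := by exact_mod_cast h1
    omega
  let c : ι → _root_.ConnectedComponents X := fun i => _root_.ConnectedComponents.mk ⟨⟨i.1, hprime i⟩, hmem i⟩
  have hc : Function.Surjective c := by
    intro y
    obtain ⟨x, rfl⟩ := _root_.ConnectedComponents.surjective_coe y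
    have := x.1.isPrime
    obtain ⟨p, hp, hpx⟩ := Ideal.exists_minimalPrimes_le (I := (⊥ : Ideal A)) (J := x.1.asIdeal) bot_le
    exact ⟨⟨p, hp⟩, mk_eq_of_le J _ x hpx⟩
  have : Finite (_root_.ConnectedComponents X) := Finite.of_surjective c hc
  have : Fintype (_root_.ConnectedComponents X) := Fintype.ofFinite _
  let P : ι → Ideal R := fun i => i.1.comap ψ
  have hP : ∀ i, (P i).IsPrime := fun i => by
    have := hprime i
    exact Ideal.comap_isPrime ψ i.1
  have hd : ∀ i, ringKrullDim (R ⧸ P i) = (d : ℕ) := by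
    intro i
    have hk : RingHom.ker ((Ideal.Quotient.mk i.1).comp ψ) = P i := by
      ext r
      rw [RingHom.mem_ker, RingHom.comp_apply, Ideal.Quotient.eq_zero_iff_mem]
      rfl
    have e1 := RingHom.quotientKerEquivOfSurjective (f := (Ideal.Quotient.mk i.1).comp ψ)
      (Ideal.Quotient.mk_surjective.comp hψ)
    rw [← ringKrullDim_eq_of_ringEquiv (Ideal.quotEquivOfEq hk), ringKrullDim_eq_of_ringEquiv e1]
    exact hA i.1 i.2
  have hsep : ∀ i j, c i ≠ c j → ∀ Q : Ideal R, Q.IsPrime → P i ≤ Q → P j ≤ Q →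
      ringKrullDim (R ⧸ Q) ≤ (t : ℕ) := by
    intro i j hij Q hQ hiQ hjQ
    have hIP : ∀ i, I ≤ P i := by
      intro i r hr
      change ψ r ∈ i.1
      rw [(hψ0 r).2 hr]
      exact zero_mem _
    let φ : A →+* R ⧸ Q := (Ideal.Quotient.factor ((hIP i).trans hiQ)).comp e.toRingHom
    have hφ : Function.Surjective φ := (Ideal.Quotient.factor_surjective ((hIP i).trans hiQ)).comp e.surjective
    have hφψ : ∀ r, φ (ψ r) = Ideal.Quotient.mk Q r := by
      intro r
      change Ideal.Quotient.factor ((hIP i).trans hiQ) (e (e.symm (Ideal.Quotient.mk I r))) = _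
      rw [e.apply_symm_apply, Ideal.Quotient.factor_mk]
    have hle : ∀ i, P i ≤ Q → i.1 ≤ RingHom.ker φ := by
      intro i hi a ha
      obtain ⟨r, rfl⟩ := hψ a
      rw [RingHom.mem_ker, hφψ, Ideal.Quotient.eq_zero_iff_mem]
      exact hi ha
    have hQ' : (RingHom.ker φ).IsPrime := RingHom.ker_isPrime φ
    have hJQ : J ≤ RingHom.ker φ := by
      by_contra hJQ
      let x : X := ⟨⟨RingHom.ker φ, hQ'⟩, (hXmem _).2 hJQ⟩
      exact hij ((mk_eq_of_le J _ x (hle i hiQ)).trans (mk_eq_of_le J _ x (hle j hjQ)).symm)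
    refine (ringKrullDim_le_of_surjective (Ideal.Quotient.lift J φ hJQ) ?_).trans hJ
    exact Ideal.Quotient.lift_surjective_of_surjective J hJQ hφ
  have hcount := comp_count hRC hn d t htd (by omega) P c hc hP hd hsep Finset.univ
  have hG : Gam ((Finset.univ.filter (fun i => c i ∈ (Finset.univ : Finset (_root_.ConnectedComponents X)))).inf P)
      (cz (ModuleCat.of R R) (n - t - 2)) = Gam I (cz (ModuleCat.of R R) (n - t - 2)) := by
    apply le_antisymm
    · apply Gam_anti
      refine le_trans ?_ Ideal.le_radical
      refine Finset.le_inf fun i _ r hr => ?_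
      change ψ r ∈ i.1
      rw [(hψ0 r).2 hr]
      exact zero_mem _
    · apply Gam_anti
      intro r hr
      have h1 : ψ r ∈ (⊥ : Ideal A).radical := by
        rw [← Ideal.sInf_minimalPrimes, Submodule.mem_sInf]
        intro p hp
        exact (Finset.inf_le (f := P) (b := (⟨p, hp⟩ : ι)) (by simp)) hr
      obtain ⟨k, hk⟩ := h1
      refine ⟨k, ?_⟩
      rw [← hψ0, map_pow]
      simpa using hk
  rw [Finset.card_univ, GZ, hG] at hcount
  have hL : Gam I (ResidueField R) = ⊤ := by
    rw [eq_top_iff]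
    intro x _
    rw [mem_Gam]
    refine le_trans ?_ Ideal.le_radical
    intro a ha
    rw [Ideal.mem_torsionOf_iff]
    exact quot_kill (maximalIdeal R) a (hI ha) x
  have hup := eln_upper (ModuleCat.of R R) I (ResidueField R) hL t n (by omega)
  have h1 : eln (ModuleCat.of R (ResidueField R)) (ModuleCat.of R R) n ≤ 1 := RC_eln_le hRC
  have hfinal : (Fintype.card (_root_.ConnectedComponents X) : ℕ∞) ≤ 1 + ∑ i ∈ Finset.range (t + 1),
      eln (ModuleCat.of R (ResidueField R)) (GH (ModuleCat.of R R) I (n - i - 2)) i :=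
    (hcount.trans hup).trans (add_le_add_left h1 _)
  rw [Nat.card_eq_fintype_card]
  have h2 : ∑ i ∈ Finset.range (t + 1), lyubeznikNumber R I n i (i + 1) =
      ((∑ i ∈ Finset.range (t + 1),
      eln (ModuleCat.of R (ResidueField R)) (GH (ModuleCat.of R R) I (n - i - 2)) i : ℕ∞) : WithBot ℕ∞) := by
    rw [WithBot.coe_sum]
    refine Finset.sum_congr rfl fun i hi => ?_
    rw [Finset.mem_range] at hi
    exact lyub_eq I n i (by omega)
  rw [h2]
  exact_mod_cast WithBot.coe_le_coe.2 hfinal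

end Final

/-- Let `A` be an equidimensional complete local ring containing a field of
dimension `d ≥ 2`, with separably closed residue field, presented as `A ≅ R/I`
with `R` an `n`-dimensional complete regular local ring containing a field.  For
all `0 ≤ t ≤ d - 2` and all closed `X = V(J) ⊆ Spec A` with `dim X ≤ t`, the
number of connected components of `Spec A \ X` is at most
`1 + Σ_{i=0}^{t} λ_{i,i+1}(A)`. -/
theorem card_components_le_one_add_sum_lyubeznik
    (A : Type u) [CommRing A] [IsLocalRing A] [IsNoetherianRing A]
    [IsAdicComplete (IsLocalRing.maximalIdeal A) A]
    (hAfield : ContainsField A) [IsSepClosed (ResidueField A)]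
    (hAequi : ∀ p ∈ minimalPrimes A, ringKrullDim (A ⧸ p) = ringKrullDim A)
    (R : Type u) [CommRing R] [IsLocalRing R] [IsNoetherianRing R]
    [IsAdicComplete (IsLocalRing.maximalIdeal R) R]
    (hRfield : ContainsField R) (hreg : IsRegularLocal R)
    (n : ℕ) (hn : ringKrullDim R = (n : ℕ))
    (I : Ideal R) (e : A ≃+* R ⧸ I)
    (d : ℕ) (hd : 2 ≤ d) (hdimA : ringKrullDim A = (d : ℕ))
    (t : ℕ) (htd : t ≤ d - 2) :
    ∀ J : Ideal A, ringKrullDim (A ⧸ J) ≤ ((t : ℕ) : WithBot ℕ∞) →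
      ((Nat.card (_root_.ConnectedComponents
          ((PrimeSpectrum.zeroLocus (J : Set A))ᶜ : Set (PrimeSpectrum A))) : ℕ) : WithBot ℕ∞) ≤
        1 + ∑ i ∈ Finset.range (t + 1), lyubeznikNumber R I n i (i + 1) := by
  intro J hJ
  refine main_bound A R hreg n hn I e d (fun p hp => (hAequi p hp).trans hdimA) ?_ t
    (by omega) ?_ J hJ
  · have h := ringKrullDim_le_of_surjective (e.symm.toRingHom.comp (Ideal.Quotient.mk I))
      (e.symm.surjective.comp Ideal.Quotient.mk_surjective)
    rw [hdimA, hn] at h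
    exact_mod_cast h
  · refine IsLocalRing.le_maximalIdeal ?_
    intro hI
    have hs : Subsingleton (R ⧸ I) := Ideal.Quotient.subsingleton_iff.2 hI
    exact one_ne_zero (e.injective (Subsingleton.elim (e (1 : A)) (e 0)))
end
end

section
/- Let A be an equidimensional complete local ring containing a field, with separably closed residue field. Then c(A) ≥ depth(A) − 1, where c(A) is the connectedness dimension. -/
open IsLocalRing PrimeSpectrum CategoryTheory

noncomputable section

universe u

/-- The depth of a local ring `A`: the least `j` such that `Ext^j_A(k, A) ≠ 0`
(as an element of `ℕ∞`, so `⊤` if no such `j` exists). -/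
noncomputable def localDepth (A : Type u) [CommRing A] [IsLocalRing A] : ℕ∞ :=
  sInf {m : ℕ∞ | ∃ j : ℕ, m = j ∧
    ¬ Subsingleton (((_root_.Ext A (ModuleCat.{u} A) j).obj
      (Opposite.op (ModuleCat.of A (ResidueField A)))).obj (ModuleCat.of A A))}

namespace DepthAux

open scoped Pointwise

variable {A : Type u} [CommRing A]

/-- Vanishing of the `i`-th Ext, computed with a resolution. -/
def EV {X : ModuleCat.{u} A} (P : ProjectiveResolution X) (M : ModuleCat.{u} A) (i : ℕ) : Prop :=
  ∀ f : P.complex.X i ⟶ M, P.complex.d (i + 1) i ≫ f = 0 →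
    ∃ g : P.complex.X (i - 1) ⟶ M, P.complex.d i (i - 1) ≫ g = f

lemma EV_of_subsingleton {X : ModuleCat.{u} A} (P : ProjectiveResolution X) (M : ModuleCat.{u} A)
    (i : ℕ) (h : Subsingleton (((_root_.Ext A (ModuleCat.{u} A) i).obj (Opposite.op X)).obj M)) :
    EV P M i := by
  have h1 : Limits.IsZero ((P.complex.linearYonedaObj A M).homology i) :=
    Limits.IsZero.of_iso (ModuleCat.isZero_of_subsingleton _) (P.isoExt (R := A) i M).symm
  rw [← HomologicalComplex.exactAt_iff_isZero_homology,
    HomologicalComplex.exactAt_iff' _ (i - 1) i (i + 1) (by cases i <;> simp) (by simp),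
    ShortComplex.moduleCat_exact_iff] at h1
  intro f hf
  obtain ⟨g, hg⟩ := h1 f hf
  exact ⟨g, hg⟩

lemma EV_shift {X : ModuleCat.{u} A} (P : ProjectiveResolution X)
    (S : ShortComplex (ModuleCat.{u} A)) (hS : S.ShortExact) (i : ℕ)
    (h0 : EV P S.X₂ i) (h1 : EV P S.X₁ (i + 1)) : EV P S.X₃ i := by
  intro f hf
  have := hS.epi_g
  have := hS.mono_f
  have hpi : Projective (P.complex.X i) := P.projective i
  let f' := Projective.factorThru f S.g
  have hf' : f' ≫ S.g = f := Projective.factorThru_comp f S.g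
  let h := hS.exact.lift (P.complex.d (i + 1) i ≫ f') (by rw [Category.assoc, hf', hf])
  have hh : h ≫ S.f = P.complex.d (i + 1) i ≫ f' := hS.exact.lift_f _ _
  obtain ⟨g, hg⟩ : ∃ g : P.complex.X i ⟶ S.X₁, P.complex.d (i + 1) i ≫ g = h := h1 h (by
    rw [← cancel_mono S.f, Category.assoc, hh]
    simp)
  obtain ⟨g', hg'⟩ := h0 (f' - g ≫ S.f) (by
    rw [Preadditive.comp_sub, ← hh, ← hg]
    simp)
  refine ⟨g' ≫ S.g, ?_⟩
  rw [← Category.assoc, hg', Preadditive.sub_comp, hf']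
  simp

lemma hom_subsingleton {X : ModuleCat.{u} A} (P : ProjectiveResolution X)
    (M : ModuleCat.{u} A) (h : EV P M 0) : Subsingleton (X →ₗ[A] M) := by
  refine subsingleton_of_forall_eq 0 fun f => ?_
  let p0 : P.complex.X 0 ⟶ X := P.π.f 0
  have hpi : Epi p0 := inferInstanceAs (Epi (P.π.f 0))
  let f' : X ⟶ M := ModuleCat.ofHom f
  have hd : P.complex.d 1 0 ≫ p0 = 0 := P.complex_d_comp_π_f_zero
  obtain ⟨g, hg⟩ := h (p0 ≫ f') (by
    rw [← Category.assoc, hd, Limits.zero_comp])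
  have h2 : p0 ≫ f' = 0 := by
    rw [← hg, P.complex.shape _ _ (by simp)]; simp
  have h3 : f' = 0 := by
    rw [← cancel_epi p0, h2, Limits.comp_zero]
  exact congrArg ModuleCat.Hom.hom h3

variable [IsLocalRing A] [IsNoetherianRing A]

lemma EV_quot {X : ModuleCat.{u} A} (P : ProjectiveResolution X) (n : ℕ)
    (M : Type u) [AddCommGroup M] [Module A M] (x : A) (hx : IsSMulRegular M x)
    (h : ∀ i < n + 1, EV P (ModuleCat.of A M) i) :
    ∀ i < n, EV P (ModuleCat.of A (QuotSMulTop x M)) i := fun i hi =>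
  EV_shift P _ (IsSMulRegular.smulShortComplex_shortExact (M := ModuleCat.of A M) hx) i
    (h i (by omega)) (h (i + 1) (by omega))

lemma key (P : ProjectiveResolution (ModuleCat.of A (ResidueField A))) (n : ℕ) :
    ∀ (M : Type u) [AddCommGroup M] [Module A M] [Module.Finite A M],
    (∀ i < n, EV P (ModuleCat.of A M) i) → ∀ (J : Ideal A) (y : M), y ≠ 0 →
    (∀ a ∈ J, a • y = 0) → (n : WithBot ℕ∞) ≤ ringKrullDim (A ⧸ J) := by
  induction n with
  | zero =>
    intro M _ _ _ _ J y hy hJ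
    have : Nontrivial (A ⧸ J) := by
      rw [Ideal.Quotient.nontrivial_iff]
      rintro rfl
      exact hy (by simpa using hJ 1 trivial)
    simpa using ringKrullDim_nonneg_of_nontrivial
  | succ n ih =>
    intro M _ _ _ h J y hy hJ
    obtain ⟨p, hp, hle⟩ := exists_le_isAssociatedPrime_of_isNoetherianRing A y hy
    have hJp : J ≤ p := le_trans (fun a ha => by simpa [Submodule.mem_colon_singleton] using hJ a ha) hle
    refine le_trans ?_ (ringKrullDim_le_of_surjective (Ideal.Quotient.factor hJp)
      (Ideal.Quotient.factor_surjective hJp))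
    have hpp := hp.isPrime
    obtain ⟨y, hy, hpy⟩ : ∃ y : M, y ≠ 0 ∧ ∀ a ∈ p, a • y = 0 := by
      obtain ⟨hp1, z, hz⟩ := isAssociatedPrime_iff.mp hp
      have hz' : ∀ a, a ∈ p ↔ a • z = 0 := fun a => by
        rw [hz, Submodule.mem_colon_singleton]; simp
      refine ⟨z, fun h0 => hp1.ne_top ?_, fun a ha => (hz' a).1 ha⟩
      rw [Ideal.eq_top_iff_one, hz', h0, smul_zero]
    have hs := hom_subsingleton P (ModuleCat.of A M) (h 0 (by omega))
    obtain ⟨x, hxm, hx⟩ := IsSMulRegular.subsingleton_linearMap_iff.mp hs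
    have hxm : x ∈ maximalIdeal A := by
      have := Module.mem_annihilator.mp hxm (1 : ResidueField A)
      rw [← IsLocalRing.residue_eq_zero_iff]
      simpa [Algebra.smul_def] using this
    have hx : IsSMulRegular M x := hx
    let H : Submodule A M := Submodule.torsionBySet A M (p : Set A)
    have hH : ∀ z, z ∈ H ↔ ∀ a ∈ p, a • z = 0 := fun z => by
      simp [H, Submodule.mem_torsionBySet_iff]
    obtain ⟨z, hzH, hz⟩ : ∃ z ∈ H, z ∉ x • (⊤ : Submodule A M) := by
      by_contra! hcon
      have : H = ⊥ := by
        refine Submodule.eq_bot_of_le_smul_of_le_jacobson_bot (Ideal.span {x}) H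
          (IsNoetherian.noetherian H) ?_ ?_
        · intro w hw
          obtain ⟨v, -, rfl⟩ := (Submodule.mem_smul_pointwise_iff_exists _ _ _).mp (hcon w hw)
          refine Submodule.smul_mem_smul (Ideal.mem_span_singleton_self x) ((hH v).2 fun a ha => ?_)
          apply hx
          have := (hH _).1 hw a ha
          simp only [smul_zero]
          rw [smul_comm, this]
        · rw [IsLocalRing.jacobson_eq_maximalIdeal _ bot_ne_top]
          simpa [Ideal.span_le] using hxm
      have hyH := (hH y).2 hpy
      rw [this] at hyH
      exact hy (by simpa using hyH)
    have hfin := ih (QuotSMulTop x M) (EV_quot P n M x hx h) (p ⊔ Ideal.span {x})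
      (Submodule.Quotient.mk z) (by simpa [Submodule.Quotient.mk_eq_zero] using hz) (by
        intro a ha
        obtain ⟨b, hb, c, hc, rfl⟩ := Submodule.mem_sup.mp ha
        obtain ⟨c, rfl⟩ := Ideal.mem_span_singleton'.mp hc
        rw [← Submodule.Quotient.mk_smul, Submodule.Quotient.mk_eq_zero, add_smul,
          (hH z).1 hzH b hb, zero_add, mul_comm, mul_smul]
        exact Submodule.smul_mem_pointwise_smul _ _ _ trivial)
    have hxp : x ∉ p := fun hxp => hy (hx (by simpa using hpy x hxp))
    have := ringKrullDim_succ_le_of_surjective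
      (Ideal.Quotient.factor (le_sup_left : p ≤ p ⊔ Ideal.span {x}))
      (Ideal.Quotient.factor_surjective _) (r := Ideal.Quotient.mk p x)
      (mem_nonZeroDivisors_of_ne_zero (by simpa [Ideal.Quotient.eq_zero_iff_mem] using hxp))
      (by
        simp only [Ideal.Quotient.factor_mk, Ideal.Quotient.eq_zero_iff_mem]
        exact Ideal.mem_sup_right (Ideal.mem_span_singleton_self x))
    refine le_trans ?_ this
    push_cast
    gcongr

lemma exists_reg (P : ProjectiveResolution (ModuleCat.of A (ResidueField A))) (n : ℕ)
    (M : Type u) [AddCommGroup M] [Module A M] [Module.Finite A M]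
    (h : ∀ i < n, EV P (ModuleCat.of A M) i) (J : Ideal A)
    (hJ : ringKrullDim (A ⧸ J) < n) : ∃ a ∈ J, IsSMulRegular M a := by
  have : Subsingleton ((A ⧸ J) →ₗ[A] M) := by
    refine subsingleton_of_forall_eq 0 fun f => ?_
    by_contra hf
    refine hJ.not_ge (key P n M h J (f 1) (fun h1 => hf ?_) ?_)
    · ext
      simpa using h1
    · intro a ha
      rw [← map_smul]
      have : a • (1 : A ⧸ J) = 0 := by
        simpa [Algebra.smul_def] using Ideal.Quotient.eq_zero_iff_mem.mpr ha
      rw [this, map_zero]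
  obtain ⟨a, ha, h⟩ := IsSMulRegular.subsingleton_linearMap_iff.mp this
  exact ⟨a, by simpa [Ideal.annihilator_quotient] using ha, h⟩


lemma algebra_part (P Q : Ideal A) (hPQ : P * Q = ⊥) (a b : A) (ha : a ∈ P ⊔ Q) (hb : b ∈ P ⊔ Q)
    (hra : ∀ c, a * c = 0 → c = 0) (hrb : ∀ c, a ∣ b * c → a ∣ c) : P = ⊥ ∨ Q = ⊥ := by
  have h0 : ∀ p ∈ P, ∀ q ∈ Q, p * q = 0 := fun p hp q hq => by
    simpa [hPQ] using Ideal.mul_mem_mul hp hq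
  obtain ⟨p1, hp1, q1, hq1, rfl⟩ := Submodule.mem_sup.mp ha
  obtain ⟨p2, hp2, q2, hq2, rfl⟩ := Submodule.mem_sup.mp hb
  have e1 := h0 _ hp1 _ hq1
  have e2 := h0 _ hp1 _ hq2
  have e3 := h0 _ hp2 _ hq1
  obtain ⟨e, he⟩ := hrb p1 ⟨p2, by linear_combination e2 - e3⟩
  have hid : e * (1 - e) = 0 := by
    apply hra; apply hra
    have : (p1 + q1) * p1 = p1 * p1 := by linear_combination e1
    linear_combination this + (- (p1 + q1) + p1 + (p1 + q1) * e) * he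
  rcases IsLocalRing.isUnit_or_isUnit_one_sub_self e with hu | hu
  · right
    have : 1 - e = 0 := by simpa using (hu.mul_right_eq_zero).1 hid
    have hq : q1 = 0 := by linear_combination -he + (p1 + q1) * this
    rw [eq_bot_iff]
    intro q hq'
    exact hra q (by rw [hq, add_zero]; exact h0 _ hp1 _ hq')
  · left
    have : e = 0 := by simpa using (hu.mul_left_eq_zero).1 hid
    have hq : p1 = 0 := by rw [he, this, mul_zero]
    rw [eq_bot_iff]
    intro q hq'
    exact hra q (by rw [hq, zero_add, mul_comm]; exact h0 _ hq' _ hq1)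


lemma topo (J : Ideal A) (hne : ((zeroLocus (J : Set A))ᶜ).Nonempty)
    (hJ : ¬ IsConnected ((zeroLocus (J : Set A))ᶜ)) :
    ∃ P Q : Ideal A, P * Q = ⊥ ∧ P ≠ ⊥ ∧ Q ≠ ⊥ ∧
      zeroLocus ((P ⊔ Q : Ideal A) : Set A) = zeroLocus (J : Set A) := by
  have hp : ¬ _root_.IsPreconnected ((zeroLocus (J : Set A))ᶜ) := fun h => hJ ⟨hne, h⟩
  unfold _root_.IsPreconnected at hp
  push Not at hp
  obtain ⟨u, v, hu, hv, huv, hun, hvn, he⟩ := hp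
  have hD : IsOpen ((zeroLocus (J : Set A))ᶜ) := (isClosed_zeroLocus _).isOpen_compl
  obtain ⟨P, hP⟩ := (isClosed_iff_zeroLocus_ideal _).mp (hD.inter hu).isClosed_compl
  obtain ⟨Q, hQ⟩ := (isClosed_iff_zeroLocus_ideal _).mp (hD.inter hv).isClosed_compl
  have hnil : P * Q ≤ nilradical A := by
    rw [nilradical, ← zeroLocus_subset_zeroLocus_iff, zeroLocus_mul, ← hP, ← hQ,
      ← Set.compl_inter]
    intro z _ hz
    have : z ∈ (zeroLocus (J : Set A))ᶜ ∩ (u ∩ v) := ⟨hz.1.1, hz.1.2, hz.2.2⟩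
    rw [he] at this
    exact this
  obtain ⟨N, hN⟩ := Ideal.exists_pow_le_of_le_radical_of_fg hnil (IsNoetherian.noetherian _)
  have hz : ∀ I : Ideal A, zeroLocus ((I ^ (N + 1) : Ideal A) : Set A) = zeroLocus (I : Set A) :=
    fun I => zeroLocus_pow I (Nat.succ_ne_zero N)
  have aux : ∀ (I : Ideal A) (s : Set (PrimeSpectrum A)), s.Nonempty →
      sᶜ = zeroLocus (I : Set A) → I ^ (N + 1) ≠ ⊥ := by
    intro I s hs h h0
    have h2 := hz I
    rw [h0, ← h] at h2
    obtain ⟨z, hzs⟩ := hs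
    have : z ∈ sᶜ := by rw [← h2]; simp
    exact this hzs
  refine ⟨P ^ (N + 1), Q ^ (N + 1), ?_, aux P _ hun hP, aux Q _ hvn hQ, ?_⟩
  · rw [← mul_pow, eq_bot_iff]
    exact (Ideal.pow_le_pow_right (Nat.le_succ N)).trans hN
  · rw [zeroLocus_sup, hz, hz, ← hP, ← hQ, ← Set.compl_union, ← Set.inter_union_distrib_left,
      Set.inter_eq_left.mpr huv, compl_compl]

end DepthAux

open DepthAux in
open scoped Pointwise in
/-- Let `A` be an equidimensional complete local ring containing a field, with
separably closed residue field.  Then `c(A) ≥ depth A - 1`, where `c(A)` is the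
connectedness dimension. -/
theorem connDim_ge_depth_sub_one
    (A : Type u) [CommRing A] [IsLocalRing A] [IsNoetherianRing A]
    [IsAdicComplete (IsLocalRing.maximalIdeal A) A]
    (hAfield : ContainsField A) [IsSepClosed (ResidueField A)]
    (hAequi : ∀ p ∈ minimalPrimes A, ringKrullDim (A ⧸ p) = ringKrullDim A) :
    ((localDepth A : WithBot ℕ∞)) ≤ connDim A + 1 := by
  have hmem : connDim A ∈ {d | ∃ J : Ideal A, ringKrullDim (A ⧸ J) = d ∧
      ¬ IsConnected ((PrimeSpectrum.zeroLocus (J : Set A))ᶜ)} :=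
    csInf_mem ⟨_, ⊥, rfl, by
      intro h
      simpa using h.nonempty⟩
  obtain ⟨J, hJd, hJ⟩ := hmem
  rw [← hJd]
  let P := projectiveResolution (ModuleCat.of A (ResidueField A))
  have hEV : ∀ n : ℕ, (n : ℕ∞) ≤ localDepth A → ∀ i < n, EV P (ModuleCat.of A A) i := by
    intro n hn i hi
    apply EV_of_subsingleton
    by_contra hns
    have : localDepth A ≤ (i : ℕ∞) := sInf_le ⟨i, rfl, hns⟩
    have := hn.trans this
    exact absurd (Nat.cast_le.mp this) (by omega)
  by_contra! hlt
  have hdim : ∀ I : Ideal A, zeroLocus (I : Set A) = zeroLocus (J : Set A) →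
      ringKrullDim (A ⧸ I) = ringKrullDim (A ⧸ J) := by
    intro I hI
    rw [ringKrullDim_quotient, ringKrullDim_quotient, hI]
  have hcase : ringKrullDim (A ⧸ J) = ⊥ ∨ ∃ m : ℕ, ringKrullDim (A ⧸ J) = m ∧
      ((m + 2 : ℕ) : ℕ∞) ≤ localDepth A := by
    generalize ringKrullDim (A ⧸ J) = d at hlt
    induction d using WithBot.recBotCoe with
    | bot => exact Or.inl rfl
    | coe d =>
      right
      have hlt' : d + 1 < localDepth A := by exact_mod_cast hlt
      induction d using ENat.recTopCoe with
      | top => simp at hlt'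
      | coe m =>
        refine ⟨m, rfl, ?_⟩
        have := Order.add_one_le_of_lt hlt'
        calc ((m + 2 : ℕ) : ℕ∞) = (m : ℕ∞) + 1 + 1 := by push_cast; ring
          _ ≤ _ := this
  by_cases hne : ((zeroLocus (J : Set A))ᶜ).Nonempty
  · obtain ⟨I1, I2, h12, h1, h2, hz⟩ := topo J hne hJ
    have hd := hdim _ hz
    rcases hcase with hb | ⟨m, hm, hdep⟩
    · have htop : I1 ⊔ I2 = ⊤ := by
        rw [← zeroLocus_empty_iff_eq_top]
        rw [hz, zeroLocus_empty_iff_eq_top]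
        by_contra hJt
        have := Ideal.Quotient.nontrivial_iff.mpr hJt
        have := ringKrullDim_nonneg_of_nontrivial (R := A ⧸ J)
        rw [hb] at this
        simp at this
      rcases algebra_part I1 I2 h12 1 1 (by simp [htop]) (by simp [htop]) (by simp) (by simp)
        with h | h
      · exact h1 h
      · exact h2 h
    · obtain ⟨a, haI, ha⟩ := exists_reg P (m + 2) A (hEV _ hdep) (I1 ⊔ I2) (by
        rw [hd, hm]; exact_mod_cast (by omega : m < m + 2))
      obtain ⟨b, hbI, hb⟩ := exists_reg P (m + 1) (QuotSMulTop a A)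
        (EV_quot P (m + 1) A a ha (hEV _ hdep)) (I1 ⊔ I2) (by
        rw [hd, hm]; exact_mod_cast (by omega : m < m + 1))
      have hq : ∀ c : A, (Submodule.Quotient.mk c : QuotSMulTop a A) = 0 ↔ a ∣ c := by
        intro c
        rw [Submodule.Quotient.mk_eq_zero, Submodule.mem_smul_pointwise_iff_exists]
        constructor
        · rintro ⟨e, -, rfl⟩
          exact ⟨e, rfl⟩
        · rintro ⟨e, rfl⟩
          exact ⟨e, trivial, rfl⟩
      rcases algebra_part I1 I2 h12 a b haI hbI
        (fun c hc => ha (by simpa using hc))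
        (fun c hc => by
          rw [← hq] at hc ⊢
          apply hb
          simp only [smul_zero]
          rw [← Submodule.Quotient.mk_smul]
          exact hc) with h | h
      · exact h1 h
      · exact h2 h
  · have hz : zeroLocus ((⊥ : Ideal A) : Set A) = zeroLocus (J : Set A) := by
      rw [Set.not_nonempty_iff_eq_empty, Set.compl_empty_iff] at hne
      rw [hne]; simp
    have hd := hdim _ hz
    rcases hcase with hb | ⟨m, hm, hdep⟩
    · have := Ideal.Quotient.nontrivial_iff.mpr (bot_ne_top (α := Ideal A))
      have := ringKrullDim_nonneg_of_nontrivial (R := A ⧸ (⊥ : Ideal A))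
      rw [hd, hb] at this
      simp at this
    · have := key P (m + 2) A (hEV _ hdep) ⊥ 1 one_ne_zero (by
        intro a ha
        simpa using ha)
      rw [hd, hm] at this
      have : m + 2 ≤ m := by exact_mod_cast this
      omega
end
end
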